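/- arXiv:2604.26863 — 7 statements merged into one kernel-verified Lean document; each statement's English description precedes it below -/
import Mathlib

section
/- For every z = (z^h, z^c) in D(A), the operator A is dissipative up to boundary terms: Re ⟨z, Az⟩ ≤ −(u₁/2)·|z^h(1)|² − (u₂/2)·|z^c(0)|² + |M|₂·‖z‖², where ⟨·,·⟩ is the L² inner product on [0,1] and ‖·‖ the L² norm. -/
open MeasureTheory intervalIntegral

/-- A function `f : ℝ → ℂ` is `H¹` on `[0,1]` with derivative `f'`. -/
def IsH1 (f f' : ℝ → ℂ) : Prop :=
  ContinuousOn f (Set.Icc 0 1) ∧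
  IntervalIntegrable f' volume 0 1 ∧
  IntervalIntegrable (fun x => ‖f' x‖ ^ 2) volume 0 1 ∧
  ∀ x ∈ Set.Icc (0:ℝ) 1, f x = f 0 + ∫ t in (0:ℝ)..x, f' t

/-- The spectral (operator) norm of the coupling matrix `M = [[−c₁, c₁], [c₂, −c₂]]`. -/
noncomputable def specNormM (c₁ c₂ : ℝ) : ℝ :=
  ‖Matrix.toEuclideanCLM (𝕜 := ℝ) !![-c₁, c₁; c₂, -c₂]‖

/-!
The energy method. Paired with `z`, the transport term `u • z'` contributes
`u * ∫ ⟪z, z'⟫ = u / 2 * ∫ (‖z‖ ^ 2)'`, a pure boundary term because `‖z‖ ^ 2` is absolutely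
continuous along with `z`. The zeroth-order coupling is bounded pointwise: expanding the values
`z i` in an orthonormal basis turns `∑ i, ⟪z i, ∑ j, M i j • z j⟫` into a sum of values of the
quadratic form of `M` at real vectors, each controlled by the spectral norm.
-/

open scoped RealInnerProductSpace

section AbsolutelyContinuous

theorem absolutelyContinuousOnInterval_of_dist_le {X Y : Type*} [PseudoMetricSpace X]
    [PseudoMetricSpace Y] {f : ℝ → X} {g : ℝ → Y} {a b : ℝ}
    (hg : AbsolutelyContinuousOnInterval g a b)
    (hfg : ∀ x ∈ Set.uIcc a b, ∀ y ∈ Set.uIcc a b, dist (f x) (f y) ≤ dist (g x) (g y)) :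
    AbsolutelyContinuousOnInterval f a b := by
  rw [absolutelyContinuousOnInterval_iff] at hg ⊢
  intro ε hε
  obtain ⟨δ, hδ, hgδ⟩ := hg ε hε
  refine ⟨δ, hδ, fun I hI hIδ => (Finset.sum_le_sum fun i hi => ?_).trans_lt (hgδ I hI hIδ)⟩
  exact hfg _ (hI.1 i hi).1 _ (hI.1 i hi).2

variable {E : Type*} [NormedAddCommGroup E]

/-- `f` is an indefinite Lebesgue integral of `f'` on the interval with endpoints `a` and `b`:
the form in which "`f` is absolutely continuous with derivative `f'`" is used here. Nothing is
required of `f` outside the interval. -/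
structure IsIndefiniteIntegralOn [NormedSpace ℝ E] (f f' : ℝ → E) (a b : ℝ) : Prop where
  intervalIntegrable : IntervalIntegrable f' volume a b
  eq_add_integral : ∀ x ∈ Set.uIcc a b, f x = f a + ∫ t in a..x, f' t

namespace IsIndefiniteIntegralOn

section NormedSpace

variable [NormedSpace ℝ E] {f f' : ℝ → E} {a b : ℝ}

theorem sub_eq_integral (hf : IsIndefiniteIntegralOn f f' a b) {x y : ℝ}
    (hx : x ∈ Set.uIcc a b) (hy : y ∈ Set.uIcc a b) : f x - f y = ∫ t in y..x, f' t := by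
  have hint : ∀ z ∈ Set.uIcc a b, IntervalIntegrable f' volume a z := fun z hz =>
    hf.intervalIntegrable.mono_set (Set.uIcc_subset_uIcc_left hz)
  rw [hf.eq_add_integral x hx, hf.eq_add_integral y hy, add_sub_add_left_eq_sub,
    integral_interval_sub_left (hint x hx) (hint y hy)]

theorem absolutelyContinuousOnInterval (hf : IsIndefiniteIntegralOn f f' a b) :
    AbsolutelyContinuousOnInterval f a b := by
  have hnorm : IntervalIntegrable (fun t => ‖f' t‖) volume a b := hf.intervalIntegrable.norm
  refine absolutelyContinuousOnInterval_of_dist_le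
    (hnorm.absolutelyContinuousOnInterval_intervalIntegral (c := a) Set.left_mem_uIcc)
    fun x hx y hy => ?_
  have hint : ∀ z ∈ Set.uIcc a b, IntervalIntegrable (fun t => ‖f' t‖) volume a z := fun z hz =>
    hnorm.mono_set (Set.uIcc_subset_uIcc_left hz)
  rw [dist_eq_norm, hf.sub_eq_integral hx hy, Real.dist_eq,
    integral_interval_sub_left (hint x hx) (hint y hy)]
  exact norm_integral_le_abs_integral_norm

theorem continuousOn (hf : IsIndefiniteIntegralOn f f' a b) : ContinuousOn f (Set.uIcc a b) :=
  hf.absolutelyContinuousOnInterval.continuousOn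

theorem ae_hasDerivAt [CompleteSpace E] (hf : IsIndefiniteIntegralOn f f' a b) :
    ∀ᵐ x, x ∈ Set.uIoc a b → HasDerivAt f (f' x) x := by
  have hne : ∀ᵐ x : ℝ, x ≠ max a b := Measure.ae_ne volume (max a b)
  filter_upwards [hf.intervalIntegrable.ae_hasDerivAt_integral, hne] with x hderiv hx_ne hx
  have hx_nhds : Set.uIcc a b ∈ nhds x := Icc_mem_nhds hx.1 (lt_of_le_of_ne hx.2 hx_ne)
  refine ((hderiv (Set.uIoc_subset_uIcc hx) a Set.left_mem_uIcc).const_add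
    (f a)).congr_of_eventuallyEq ?_
  filter_upwards [hx_nhds] with y hy using hf.eq_add_integral y hy

end NormedSpace

theorem integral_inner [InnerProductSpace ℝ E] [CompleteSpace E] {f f' : ℝ → E} {a b : ℝ}
    (hf : IsIndefiniteIntegralOn f f' a b) :
    ∫ x in a..b, ⟪f x, f' x⟫ = (‖f b‖ ^ 2 - ‖f a‖ ^ 2) / 2 := by
  have hnorm : AbsolutelyContinuousOnInterval (fun x => ‖f x‖) a b :=
    absolutelyContinuousOnInterval_of_dist_le hf.absolutelyContinuousOnInterval
      fun x _ y _ => by simpa only [dist_eq_norm] using dist_norm_norm_le (f x) (f y)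
  have hsq : AbsolutelyContinuousOnInterval (fun x => ‖f x‖ ^ 2) a b := by
    simpa only [sq] using hnorm.fun_mul hnorm
  have hderiv : ∫ x in a..b, deriv (fun x => ‖f x‖ ^ 2) x = ∫ x in a..b, 2 * ⟪f x, f' x⟫ := by
    refine integral_congr_ae ?_
    filter_upwards [hf.ae_hasDerivAt] with x hx hx_mem using (hx hx_mem).norm_sq.deriv
  rw [hsq.integral_deriv_eq_sub, intervalIntegral.integral_const_mul] at hderiv
  linarith

end IsIndefiniteIntegralOn

theorem IsH1.isIndefiniteIntegralOn {f f' : ℝ → ℂ} (hf : IsH1 f f') :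
    IsIndefiniteIntegralOn f f' 0 1 where
  intervalIntegrable := hf.2.1
  eq_add_integral := by simpa only [Set.uIcc_of_le zero_le_one] using hf.2.2.2

end AbsolutelyContinuous

theorem intervalIntegrable_inner {𝕜 E : Type*} [RCLike 𝕜] [NormedAddCommGroup E]
    [InnerProductSpace 𝕜 E] {μ : Measure ℝ} {f g : ℝ → E} {a b : ℝ}
    (hf : ContinuousOn f (Set.uIcc a b)) (hg : IntervalIntegrable g μ a b) :
    IntervalIntegrable (fun x => inner 𝕜 (f x) (g x)) μ a b := by
  obtain ⟨C, hC⟩ := isCompact_uIcc.exists_bound_of_continuousOn hf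
  have hf_meas : AEStronglyMeasurable f (μ.restrict (Set.uIoc a b)) :=
    hf.aestronglyMeasurable_of_subset_isCompact isCompact_uIcc measurableSet_uIoc
      Set.uIoc_subset_uIcc
  rw [intervalIntegrable_iff] at hg ⊢
  refine (hg.norm.const_mul C).mono' (hf_meas.inner hg.aestronglyMeasurable) ?_
  refine ae_restrict_of_forall_mem measurableSet_uIoc fun x hx => ?_
  calc ‖inner 𝕜 (f x) (g x)‖ ≤ ‖f x‖ * ‖g x‖ := norm_inner_le_norm (f x) (g x)
    _ ≤ C * ‖g x‖ := by gcongr; exact hC x (Set.uIoc_subset_uIcc hx)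

section Coupling

variable {ι : Type*} [Fintype ι] [DecidableEq ι]

theorem inner_toEuclideanCLM_self_le (A : Matrix ι ι ℝ) (v : EuclideanSpace ℝ ι) :
    ⟪v, Matrix.toEuclideanCLM (𝕜 := ℝ) A v⟫ ≤ ‖Matrix.toEuclideanCLM (𝕜 := ℝ) A‖ * ‖v‖ ^ 2 := by
  set T := Matrix.toEuclideanCLM (𝕜 := ℝ) A
  calc ⟪v, T v⟫ ≤ ‖v‖ * ‖T v‖ := real_inner_le_norm v (T v)
    _ ≤ ‖v‖ * (‖T‖ * ‖v‖) := by gcongr; exact T.le_opNorm v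
    _ = ‖T‖ * ‖v‖ ^ 2 := by ring

theorem sum_inner_sum_smul_le {E : Type*} [NormedAddCommGroup E] [InnerProductSpace ℝ E]
    (A : Matrix ι ι ℝ) (v : ι → E) :
    ∑ i, ⟪v i, ∑ j, A i j • v j⟫ ≤ ‖Matrix.toEuclideanCLM (𝕜 := ℝ) A‖ * ∑ i, ‖v i‖ ^ 2 := by
  let S := Submodule.span ℝ (Set.range v)
  have : FiniteDimensional ℝ S := .span_of_finite ℝ (Set.finite_range v)
  let w (i : ι) : S := ⟨v i, Submodule.subset_span (Set.mem_range_self i)⟩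
  let b := stdOrthonormalBasis ℝ S
  let coord (k) : EuclideanSpace ℝ ι := WithLp.toLp 2 fun i => ⟪w i, b k⟫
  have hinner (i j : ι) : ⟪v i, v j⟫ = ∑ k, coord k i * coord k j := by
    calc ⟪v i, v j⟫ = ∑ k, ⟪w i, b k⟫ * ⟪b k, w j⟫ := (b.sum_inner_mul_inner (w i) (w j)).symm
      _ = ∑ k, coord k i * coord k j := by simp only [coord, real_inner_comm (w j)]
  have hform : ∑ i, ⟪v i, ∑ j, A i j • v j⟫
      = ∑ k, ⟪coord k, Matrix.toEuclideanCLM (𝕜 := ℝ) A (coord k)⟫ := by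
    simp only [inner_sum, real_inner_smul_right, hinner, Matrix.inner_toEuclideanCLM, dotProduct,
      Matrix.mulVec, Finset.mul_sum]
    rw [Finset.sum_comm_cycle]
    simp only [mul_left_comm]
  have hnorm : ∑ i, ‖v i‖ ^ 2 = ∑ k, ‖coord k‖ ^ 2 := by
    simp only [← real_inner_self_eq_norm_sq (v _), hinner, EuclideanSpace.real_norm_sq_eq, ← sq]
    exact Finset.sum_comm
  rw [hform, hnorm, Finset.mul_sum]
  exact Finset.sum_le_sum fun k _ => inner_toEuclideanCLM_self_le A (coord k)

end Coupling

section Transport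

variable {ι E : Type*} [Fintype ι] [NormedAddCommGroup E] {a b : ℝ} {z z' : ι → ℝ → E}

theorem intervalIntegrable_sum_inner_smul_add_sum_smul (𝕜 : Type*) [RCLike 𝕜] [NormedSpace ℝ E]
    [InnerProductSpace 𝕜 E] (u : ι → ℝ) (M : Matrix ι ι ℝ)
    (hz : ∀ i, IsIndefiniteIntegralOn (z i) (z' i) a b) :
    IntervalIntegrable (fun x => ∑ i, inner 𝕜 (z i x) (u i • z' i x + ∑ j, M i j • z j x))
      volume a b := by
  have hcoupling (i : ι) : ContinuousOn (fun x => ∑ j, M i j • z j x) (Set.uIcc a b) :=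
    continuousOn_finsetSum _ fun j _ => (hz j).continuousOn.const_smul (M i j)
  have hrhs (i : ι) :
      IntervalIntegrable (fun x => u i • z' i x + ∑ j, M i j • z j x) volume a b :=
    ((hz i).intervalIntegrable.smul (u i)).add (hcoupling i).intervalIntegrable
  simpa only [Finset.sum_fn] using IntervalIntegrable.sum Finset.univ fun i _ =>
    intervalIntegrable_inner (𝕜 := 𝕜) (hz i).continuousOn (hrhs i)

theorem integral_sum_inner_smul_add_sum_smul_le [DecidableEq ι] [InnerProductSpace ℝ E]
    [CompleteSpace E] (hab : a ≤ b) (u : ι → ℝ) (M : Matrix ι ι ℝ)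
    (hz : ∀ i, IsIndefiniteIntegralOn (z i) (z' i) a b) :
    ∫ x in a..b, ∑ i, ⟪z i x, u i • z' i x + ∑ j, M i j • z j x⟫
      ≤ (∑ i, u i / 2 * (‖z i b‖ ^ 2 - ‖z i a‖ ^ 2))
        + ‖Matrix.toEuclideanCLM (𝕜 := ℝ) M‖ * ∫ x in a..b, ∑ i, ‖z i x‖ ^ 2 := by
  have htransport (i : ι) : IntervalIntegrable (fun x => u i * ⟪z i x, z' i x⟫) volume a b :=
    (intervalIntegrable_inner (hz i).continuousOn (hz i).intervalIntegrable).const_mul (u i)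
  have hsum : IntervalIntegrable (fun x => ∑ i, u i * ⟪z i x, z' i x⟫) volume a b := by
    simpa only [Finset.sum_fn] using IntervalIntegrable.sum Finset.univ fun i _ => htransport i
  have henergy : IntervalIntegrable (fun x => ‖Matrix.toEuclideanCLM (𝕜 := ℝ) M‖
      * ∑ i, ‖z i x‖ ^ 2) volume a b :=
    (ContinuousOn.intervalIntegrable <| continuousOn_finsetSum _ fun i _ =>
      (hz i).continuousOn.norm.pow 2).const_mul _
  calc ∫ x in a..b, ∑ i, ⟪z i x, u i • z' i x + ∑ j, M i j • z j x⟫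
      ≤ ∫ x in a..b, (∑ i, u i * ⟪z i x, z' i x⟫
          + ‖Matrix.toEuclideanCLM (𝕜 := ℝ) M‖ * ∑ i, ‖z i x‖ ^ 2) := by
        refine integral_mono_on hab (intervalIntegrable_sum_inner_smul_add_sum_smul ℝ u M hz)
          (hsum.add henergy) fun x _ => ?_
        simp only [inner_add_right, real_inner_smul_right, Finset.sum_add_distrib]
        gcongr
        exact sum_inner_sum_smul_le M fun i => z i x
    _ = (∑ i, u i * ∫ x in a..b, ⟪z i x, z' i x⟫)
          + ‖Matrix.toEuclideanCLM (𝕜 := ℝ) M‖ * ∫ x in a..b, ∑ i, ‖z i x‖ ^ 2 := by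
        rw [integral_add hsum henergy, integral_finsetSum fun i _ => htransport i]
        simp only [intervalIntegral.integral_const_mul]
    _ = _ := by
        congr 1
        refine Finset.sum_congr rfl fun i _ => ?_
        rw [(hz i).integral_inner]
        ring

theorem A_dissipative_up_to_boundary_general [DecidableEq ι] [InnerProductSpace ℂ E]
    [CompleteSpace E] (hab : a ≤ b) (u : ι → ℝ) (M : Matrix ι ι ℝ)
    (hz : ∀ i, IsIndefiniteIntegralOn (z i) (z' i) a b) :
    (∫ x in a..b, ∑ i, inner ℂ (z i x) (u i • z' i x + ∑ j, M i j • z j x)).re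
      ≤ (∑ i, u i / 2 * (‖z i b‖ ^ 2 - ‖z i a‖ ^ 2))
        + ‖Matrix.toEuclideanCLM (𝕜 := ℝ) M‖ * ∫ x in a..b, ∑ i, ‖z i x‖ ^ 2 := by
  let : InnerProductSpace ℝ E := .complexToReal
  have hre := intervalIntegral_re (intervalIntegrable_sum_inner_smul_add_sum_smul ℂ u M hz)
  simp only [map_sum, ← real_inner_eq_re_inner ℂ] at hre
  exact hre.symm.trans_le (integral_sum_inner_smul_add_sum_smul_le hab u M hz)

end Transport

/-- for `z ∈ D(A)`, the operator `A` is dissipative up to boundary terms: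
`Re ⟨z, Az⟩ ≤ −(u₁/2)|z^h(1)|² − (u₂/2)|z^c(0)|² + |M|₂ ‖z‖²`. -/
theorem A_dissipative_up_to_boundary
    (u₁ u₂ c₁ c₂ : ℝ) (hu₁ : 0 < u₁) (hu₂ : 0 < u₂) (hc₁ : 0 < c₁) (hc₂ : 0 < c₂)
    (zh zc zh' zc' : ℝ → ℂ)
    (hzh : IsH1 zh zh') (hzc : IsH1 zc zc')
    (hbc0 : zh 0 = 0) (hbc1 : zc 1 = 0) :
    (∫ x in (0:ℝ)..1,
        ((starRingEnd ℂ) (zh x) * (-(u₁ : ℂ) * zh' x - (c₁ : ℂ) * (zh x - zc x)) +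
          (starRingEnd ℂ) (zc x) * ((u₂ : ℂ) * zc' x + (c₂ : ℂ) * (zh x - zc x)))).re
      ≤ -(u₁ / 2) * ‖zh 1‖ ^ 2 - (u₂ / 2) * ‖zc 0‖ ^ 2
        + specNormM c₁ c₂ * ∫ x in (0:ℝ)..1, (‖zh x‖ ^ 2 + ‖zc x‖ ^ 2) := by
  have hz : ∀ i, IsIndefiniteIntegralOn (![zh, zc] i) (![zh', zc'] i) 0 1 :=
    Fin.forall_fin_two.2 ⟨hzh.isIndefiniteIntegralOn, hzc.isIndefiniteIntegralOn⟩
  convert! A_dissipative_up_to_boundary_general zero_le_one ![-u₁, u₂] !![-c₁, c₁; c₂, -c₂] hz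
    using 4 with x x
  · simp only [Fin.sum_univ_two, Matrix.of_apply, Matrix.cons_val_zero, Matrix.cons_val_one,
      Matrix.cons_val', Matrix.cons_val_fin_one, Complex.real_smul, RCLike.inner_apply,
      Complex.ofReal_neg]
    ring
  · simp only [Fin.sum_univ_two, Matrix.cons_val_zero, Matrix.cons_val_one,
      hbc0, hbc1, norm_zero]
    ring
  · simp
end

section
/- Let κ = (κ^h, κ^c) ∈ L²([0,1]; ℂ²). There exists λ* > 0 such that for every real λ ≥ λ* the following holds: for every f = (f^h, f^c) ∈ L²([0,1]; ℂ²) there exists a unique z = (z^h, z^c) ∈ D(A) satisfying the resolvent equations λ z^h + u₁ (z^h)' + c₁(z^h − z^c) + z^c(0)·κ^h = f^h and λ z^c − u₂ (z^c)' − c₂(z^h − z^c) + z^c(0)·κ^c = f^c almost everywhere on [0,1]; moreover there exists a constant C_λ ≥ 0, independent of f, such that ‖z‖ ≤ C_λ ‖f‖. (Equivalently: λ belongs to the resolvent set of A − κC and the resolvent is a bounded operator on L²([0,1]; ℂ²).) -/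
open MeasureTheory intervalIntegral

/-- Membership in `L²([0,1]; ℂ)`. -/
def MemL2 (f : ℝ → ℂ) : Prop :=
  AEStronglyMeasurable f (volume.restrict (Set.Icc (0:ℝ) 1)) ∧
  IntervalIntegrable (fun x => ‖f x‖ ^ 2) volume 0 1

/-- `z = (zh, zc)` (with derivatives `zh', zc'`) is a solution in `D(A)` of the
resolvent equations `λ z^h + u₁ (z^h)' + c₁(z^h − z^c) + z^c(0) κ^h = f^h` and
`λ z^c − u₂ (z^c)' − c₂(z^h − z^c) + z^c(0) κ^c = f^c` a.e. on `[0,1]`. -/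
def IsResolventSol (u₁ u₂ c₁ c₂ : ℝ) (κh κc : ℝ → ℂ) (lam : ℝ)
    (fh fc : ℝ → ℂ) (zh zc zh' zc' : ℝ → ℂ) : Prop :=
  IsH1 zh zh' ∧ IsH1 zc zc' ∧ zh 0 = 0 ∧ zc 1 = 0 ∧
  (∀ᵐ x ∂(volume.restrict (Set.Icc (0:ℝ) 1)),
    (lam : ℂ) * zh x + (u₁ : ℂ) * zh' x + (c₁ : ℂ) * (zh x - zc x) + zc 0 * κh x = fh x ∧
    (lam : ℂ) * zc x - (u₂ : ℂ) * zc' x - (c₂ : ℂ) * (zh x - zc x) + zc 0 * κc x = fc x)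

/-!
Without the terms `c (zʰ - zᶜ) + zᶜ(0) κ` the resolvent equations decouple into two scalar
transport problems, which Duhamel's formula solves explicitly; by Cauchy–Schwarz against the
exponential kernel, the solution operator `R` from `L²` to `C([0,1])` has norm `O(λ^(-1/2))`.
The coupling terms form a bounded operator `K` from `C([0,1])²` to `L²`, independent of `λ`: on
continuous functions the trace `zᶜ(0)` is bounded. Hence `‖R‖ ‖K‖ < 1` for large `λ`, and
`z = R (f - K z)`, which is equivalent to the resolvent equations, has a unique solution by the
contraction principle.
-/

section SquareIntegrable

variable {α E : Type*} [MeasurableSpace α] {μ : Measure α} [NormedAddCommGroup E]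

lemma toReal_eLpNorm_two {f : α → E} (hf : MemLp f 2 μ) :
    (eLpNorm f 2 μ).toReal = √(∫ t, ‖f t‖ ^ 2 ∂μ) := by
  rw [hf.eLpNorm_eq_integral_rpow_norm two_ne_zero ENNReal.ofNat_ne_top,
    ENNReal.toReal_ofReal (by positivity), Real.sqrt_eq_rpow]
  simp

theorem norm_integral_smul_le_sqrt_mul_sqrt [NormedSpace ℝ E] {f : α → ℝ}
    {g : α → E} (hf : MemLp f 2 μ) (hg : MemLp g 2 μ) :
    ‖∫ t, f t • g t ∂μ‖ ≤ √(∫ t, f t ^ 2 ∂μ) * √(∫ t, ‖g t‖ ^ 2 ∂μ) := by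
  have holder := integral_mul_norm_le_Lp_mul_Lq (μ := μ) (f := f) (g := fun t => ‖g t‖)
    Real.HolderConjugate.two_two (by simpa using hf) (by simpa using hg.norm)
  calc ‖∫ t, f t • g t ∂μ‖ ≤ ∫ t, ‖f t • g t‖ ∂μ := norm_integral_le_integral_norm _
    _ ≤ _ := by simpa [norm_smul, Real.sqrt_eq_rpow] using holder

end SquareIntegrable

section AbsolutelyContinuous

variable {E : Type*} [NormedAddCommGroup E] [NormedSpace ℝ E]

lemma absolutelyContinuousOnInterval_integral {f : ℝ → E} {a b c : ℝ}
    (hf : IntervalIntegrable f volume a b) (hc : c ∈ Set.uIcc a b) :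
    AbsolutelyContinuousOnInterval (fun x => ∫ t in c..x, f t) a b := by
  have dist_le : ∀ x ∈ Set.uIcc a b, ∀ y ∈ Set.uIcc a b,
      dist (∫ t in c..x, f t) (∫ t in c..y, f t) ≤
        dist (∫ t in c..x, ‖f t‖) (∫ t in c..y, ‖f t‖) := by
    intro x hx y hy
    have hcz : ∀ z ∈ Set.uIcc a b, IntervalIntegrable f volume c z := fun z hz =>
      hf.mono_set (Set.uIcc_subset_uIcc hc hz)
    rw [dist_eq_norm, dist_eq_norm, integral_interval_sub_left (hcz x hx) (hcz y hy),
      integral_interval_sub_left (hcz x hx).norm (hcz y hy).norm]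
    exact norm_integral_le_abs_integral_norm
  have hnorm := hf.norm.absolutelyContinuousOnInterval_intervalIntegral hc
  rw [absolutelyContinuousOnInterval_iff] at hnorm ⊢
  intro ε hε
  obtain ⟨δ, hδ, hδε⟩ := hnorm ε hε
  refine ⟨δ, hδ, fun I hI hIδ => (Finset.sum_le_sum fun i hi => ?_).trans_lt (hδε I hI hIδ)⟩
  exact dist_le _ (hI.left i hi).1 _ (hI.left i hi).2

theorem integral_eq_sub_of_absolutelyContinuousOnInterval [CompleteSpace E] {f f' : ℝ → E} {a b : ℝ}
    (hf : AbsolutelyContinuousOnInterval f a b)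
    (hderiv : ∀ᵐ x, x ∈ Set.uIcc a b → HasDerivAt f (f' x) x)
    (hf' : IntervalIntegrable f' volume a b) :
    ∫ t in a..b, f' t = f b - f a := by
  obtain ⟨C, hC⟩ := (hf.sub (absolutelyContinuousOnInterval_integral hf'
    Set.left_mem_uIcc)).const_of_ae_hasDerivAt_zero (by
      filter_upwards [hderiv, hf'.ae_hasDerivAt_integral] with x hfx hix hx
      simpa using (hfx hx).sub (hix hx a Set.left_mem_uIcc))
  have ha := hC a Set.left_mem_uIcc
  have hb := hC b Set.right_mem_uIcc
  simp only [Pi.sub_apply, integral_same, sub_zero] at ha hb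
  rw [ha, ← hb]
  abel

end AbsolutelyContinuous

section Duhamel

variable {E : Type*} [NormedAddCommGroup E] [NormedSpace ℝ E]

/-- Duhamel's formula for the solution of the scalar transport problem `y' + a y = g`,
`y p = 0`. -/
noncomputable def duhamel (p a : ℝ) (g : ℝ → E) (x : ℝ) : E :=
  ∫ t in p..x, Real.exp (a * (t - x)) • g t

lemma duhamel_eq_exp_smul_integral (p a : ℝ) (g : ℝ → E) (x : ℝ) :
    duhamel p a g x = Real.exp (-a * x) • ∫ t in p..x, Real.exp (a * t) • g t := by
  rw [duhamel, ← intervalIntegral.integral_smul]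
  refine integral_congr fun t _ => ?_
  simp only [smul_smul, ← Real.exp_add]
  ring_nf

lemma duhamel_congr_ae (a : ℝ) {g₁ g₂ : ℝ → E} {p x : ℝ}
    (h : ∀ᵐ t, t ∈ Set.uIoc p x → g₁ t = g₂ t) : duhamel p a g₁ x = duhamel p a g₂ x :=
  integral_congr_ae (h.mono fun t ht hmem => by rw [ht hmem])

lemma duhamel_const_smul {𝕜 : Type*} [RCLike 𝕜] [NormedSpace 𝕜 E] [SMulCommClass ℝ 𝕜 E]
    (p a : ℝ) (c : 𝕜) (g : ℝ → E) (x : ℝ) :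
    duhamel p a (fun t => c • g t) x = c • duhamel p a g x := by
  simp only [duhamel, smul_comm _ c, intervalIntegral.integral_smul]

lemma duhamel_add (a : ℝ) {g₁ g₂ : ℝ → E} {p x : ℝ} (hg₁ : IntervalIntegrable g₁ volume p x)
    (hg₂ : IntervalIntegrable g₂ volume p x) :
    duhamel p a (fun t => g₁ t + g₂ t) x = duhamel p a g₁ x + duhamel p a g₂ x := by
  simp only [duhamel, smul_add]
  exact integral_add (hg₁.continuousOn_smul (by fun_prop)) (hg₂.continuousOn_smul (by fun_prop))

lemma intervalIntegrable_exp_smul (a : ℝ) {g : ℝ → E} {p x : ℝ}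
    (hg : IntervalIntegrable g volume p x) :
    IntervalIntegrable (fun t => Real.exp (a * t) • g t) volume p x :=
  hg.continuousOn_smul (by fun_prop)

lemma continuousOn_duhamel (a : ℝ) {g : ℝ → E} {p b c : ℝ} (hp : p ∈ Set.uIcc b c)
    (hg : IntervalIntegrable g volume b c) :
    ContinuousOn (duhamel p a g) (Set.uIcc b c) := by
  refine ContinuousOn.congr ?_ fun x _ => duhamel_eq_exp_smul_integral p a g x
  exact ContinuousOn.smul (by fun_prop)
    (continuousOn_primitive_interval' (intervalIntegrable_exp_smul a hg) hp)

lemma integral_exp_mul_sub_sq {a : ℝ} (ha : a ≠ 0) (p x : ℝ) :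
    ∫ t in p..x, Real.exp (a * (t - x)) ^ 2 = (1 - Real.exp (2 * (a * (p - x)))) / (2 * a) := by
  have hderiv : ∀ t ∈ Set.uIcc p x, HasDerivAt
      (fun t => Real.exp (2 * (a * (t - x))) / (2 * a)) (Real.exp (a * (t - x)) ^ 2) t := by
    intro t _
    have := (((((hasDerivAt_id t).sub_const x).const_mul a).const_mul 2).exp).div_const (2 * a)
    refine this.congr_deriv ?_
    rw [← Real.exp_nat_mul, id_eq, Nat.cast_ofNat, mul_one, mul_div_cancel_right₀ _ (by positivity)]
  rw [integral_eq_sub_of_hasDerivAt hderiv (Continuous.intervalIntegrable (by fun_prop) _ _)]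
  simp [sub_div]

theorem norm_duhamel_le {a : ℝ} {g : ℝ → E} {p x : ℝ} (ha : a ≠ 0) (hpx : 0 ≤ a * (x - p))
    (hg : MemLp g 2 (volume.restrict (Set.uIoc p x))) :
    ‖duhamel p a g x‖ ≤ √(∫ t in Set.uIoc p x, ‖g t‖ ^ 2) / √(2 * |a|) := by
  have hexp : MemLp (fun t => Real.exp (a * (t - x))) 2 (volume.restrict (Set.uIoc p x)) := by
    refine (memLp_two_iff_integrable_sq (by fun_prop)).2 ?_
    exact intervalIntegrable_iff.1 (Continuous.intervalIntegrable (by fun_prop) p x)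
  have hkernel : ∫ t in Set.uIoc p x, Real.exp (a * (t - x)) ^ 2 ≤ 1 / (2 * |a|) := by
    have hdecay : Real.exp (2 * (a * (p - x))) ≤ 1 := Real.exp_le_one_iff.2 (by linarith)
    calc ∫ t in Set.uIoc p x, Real.exp (a * (t - x)) ^ 2
        = |∫ t in Set.uIoc p x, Real.exp (a * (t - x)) ^ 2| :=
          (abs_of_nonneg (integral_nonneg fun t => by positivity)).symm
      _ = (1 - Real.exp (2 * (a * (p - x)))) / (2 * |a|) := by
          rw [← abs_intervalIntegral_eq, integral_exp_mul_sub_sq ha, abs_div, abs_mul, abs_two,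
            abs_of_nonneg (sub_nonneg.2 hdecay)]
      _ ≤ 1 / (2 * |a|) := by
          gcongr
          exact sub_le_self _ (Real.exp_pos _).le
  calc ‖duhamel p a g x‖
      = ‖∫ t in Set.uIoc p x, Real.exp (a * (t - x)) • g t‖ := norm_intervalIntegral_eq _ _ _ _
    _ ≤ √(∫ t in Set.uIoc p x, Real.exp (a * (t - x)) ^ 2) *
          √(∫ t in Set.uIoc p x, ‖g t‖ ^ 2) := norm_integral_smul_le_sqrt_mul_sqrt hexp hg
    _ ≤ √(1 / (2 * |a|)) * √(∫ t in Set.uIoc p x, ‖g t‖ ^ 2) := by gcongr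
    _ = √(∫ t in Set.uIoc p x, ‖g t‖ ^ 2) / √(2 * |a|) := by
        rw [Real.sqrt_div zero_le_one, Real.sqrt_one, one_div_mul_eq_div]

variable [CompleteSpace E]

theorem exp_mul_smul_integral (a : ℝ) {h : ℝ → E} {p x : ℝ}
    (hh : IntervalIntegrable h volume p x) :
    Real.exp (a * x) • ∫ t in p..x, h t =
      ∫ t in p..x, Real.exp (a * t) • (h t + a • ∫ s in p..t, h s) := by
  have hexp : ContDiff ℝ 1 fun t => Real.exp (a * t) := by fun_prop
  have hac := absolutelyContinuousOnInterval_integral hh Set.left_mem_uIcc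
  have key := integral_eq_sub_of_absolutelyContinuousOnInterval
    (f' := fun t => Real.exp (a * t) • (h t + a • ∫ s in p..t, h s))
    (hexp.contDiffOn.absolutelyContinuousOnInterval.smul hac) ?_ ?_
  · simpa using key.symm
  · filter_upwards [hh.ae_hasDerivAt_integral] with t ht hmem
    refine (((hasDerivAt_id t).const_mul a).exp.smul
      (ht hmem p Set.left_mem_uIcc)).congr_deriv ?_
    simp only [id_eq, mul_one, smul_add, smul_smul]
  · exact intervalIntegrable_exp_smul a
      (hh.add (hac.continuousOn.const_smul a).intervalIntegrable)

theorem duhamel_eq_integral (a : ℝ) {g : ℝ → E} {p x : ℝ}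
    (hg : IntervalIntegrable g volume p x) :
    duhamel p a g x = ∫ t in p..x, (g t - a • duhamel p a g t) := by
  rw [duhamel_eq_exp_smul_integral, exp_mul_smul_integral _ (intervalIntegrable_exp_smul a hg)]
  refine integral_congr fun t _ => ?_
  simp only [duhamel_eq_exp_smul_integral, smul_add, smul_smul, mul_comm _ (-a),
    ← Real.exp_add, sub_eq_add_neg, ← neg_smul, neg_mul, neg_add_cancel, Real.exp_zero, one_smul]

theorem eq_duhamel_of_eq_integral {a : ℝ} {g h y : ℝ → E} {p x : ℝ}
    (hh : IntervalIntegrable h volume p x) (hy : ∀ t ∈ Set.uIcc p x, y t = ∫ s in p..t, h s)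
    (heq : ∀ᵐ t, t ∈ Set.uIoc p x → h t + a • y t = g t) :
    y x = duhamel p a g x := by
  have key : Real.exp (a * x) • y x = ∫ t in p..x, Real.exp (a * t) • g t := by
    rw [hy x Set.right_mem_uIcc, exp_mul_smul_integral a hh]
    refine integral_congr_ae (heq.mono fun t ht hmem => ?_)
    rw [← ht hmem, hy t (Set.uIoc_subset_uIcc hmem)]
  rw [duhamel_eq_exp_smul_integral, ← key, smul_smul, ← Real.exp_add]
  simp

end Duhamel

section Perturbation

variable {𝕜 X Y : Type*} [NontriviallyNormedField 𝕜] [NormedAddCommGroup X] [NormedSpace 𝕜 X]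
  [NormedAddCommGroup Y] [NormedSpace 𝕜 Y] {R : Y →ₗ[𝕜] X} {K : X →L[𝕜] Y} {r : ℝ}

theorem norm_le_of_eq_map_sub (hR : ∀ y, ‖R y‖ ≤ r * ‖y‖) (hr : 0 ≤ r) (hK : r * ‖K‖ < 1)
    {f : Y} {z : X} (hz : z = R (f - K z)) : ‖z‖ ≤ r / (1 - r * ‖K‖) * ‖f‖ := by
  have hle : ‖z‖ ≤ r * ‖f‖ + r * ‖K‖ * ‖z‖ := calc
    ‖z‖ = ‖R (f - K z)‖ := congrArg norm hz
    _ ≤ r * ‖f - K z‖ := hR _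
    _ ≤ r * (‖f‖ + ‖K‖ * ‖z‖) := by
        gcongr
        exact (norm_sub_le _ _).trans (by gcongr; exact K.le_opNorm z)
    _ = r * ‖f‖ + r * ‖K‖ * ‖z‖ := by ring
  rw [div_mul_eq_mul_div, le_div_iff₀ (sub_pos.2 hK)]
  linarith

theorem existsUnique_eq_map_sub [CompleteSpace X] (hR : ∀ y, ‖R y‖ ≤ r * ‖y‖) (hr : 0 ≤ r)
    (hK : r * ‖K‖ < 1) (f : Y) : ∃! z, z = R (f - K z) := by
  have hcontr : ContractingWith ⟨r * ‖K‖, by positivity⟩ fun z => R (f - K z) := by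
    refine ⟨by exact_mod_cast hK, LipschitzWith.of_dist_le_mul fun z w => ?_⟩
    calc dist (R (f - K z)) (R (f - K w)) = ‖R (K (w - z))‖ := by
          rw [dist_eq_norm, ← map_sub, map_sub K, sub_sub_sub_cancel_left]
      _ ≤ r * (‖K‖ * ‖w - z‖) := (hR _).trans (by gcongr; exact K.le_opNorm _)
      _ = r * ‖K‖ * dist z w := by rw [dist_comm, dist_eq_norm, mul_assoc]
  exact ⟨hcontr.fixedPoint, hcontr.fixedPoint_isFixedPt.symm,
    fun w hw => hcontr.fixedPoint_unique hw.symm⟩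

end Perturbation

section UnitInterval

lemma memL2_iff_memLp {f : ℝ → ℂ} :
    MemL2 f ↔ MemLp f 2 (volume.restrict (Set.Icc (0 : ℝ) 1)) := by
  rw [MemL2, intervalIntegrable_iff_integrableOn_Icc_of_le zero_le_one]
  exact ⟨fun h => (memLp_two_iff_integrable_sq_norm h.1).2 h.2,
    fun h => ⟨h.1, (memLp_two_iff_integrable_sq_norm h.1).1 h⟩⟩

lemma memL2_of_continuousOn {f : ℝ → ℂ} (hf : ContinuousOn f (Set.Icc 0 1)) : MemL2 f :=
  ⟨hf.aestronglyMeasurable measurableSet_Icc,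
    ContinuousOn.intervalIntegrable_of_Icc zero_le_one (hf.norm.pow 2)⟩

lemma MemL2.intervalIntegrable {f : ℝ → ℂ} (hf : MemL2 f) {p x : ℝ}
    (hp : p ∈ Set.Icc (0 : ℝ) 1) (hx : x ∈ Set.Icc (0 : ℝ) 1) :
    IntervalIntegrable f volume p x := by
  have hint : IntegrableOn f (Set.Icc 0 1) := (memL2_iff_memLp.1 hf).integrable one_le_two
  exact (hint.mono_set (Set.uIcc_subset_Icc hp hx)).intervalIntegrable

lemma MemL2.sub_const_mul {f g : ℝ → ℂ} (hf : MemL2 f) (hg : MemL2 g) (c : ℂ) :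
    MemL2 fun x => f x - c * g x := by
  rw [memL2_iff_memLp] at hf hg ⊢
  exact hf.sub (hg.const_mul c)

lemma IsH1.eq_add_integral {y y' : ℝ → ℂ} (hy : IsH1 y y') {p x : ℝ}
    (hp : p ∈ Set.Icc (0 : ℝ) 1) (hx : x ∈ Set.Icc (0 : ℝ) 1) : y x = y p + ∫ t in p..x, y' t := by
  obtain ⟨-, hint, -, hy⟩ := hy
  have hsub : ∀ t ∈ Set.Icc (0 : ℝ) 1, IntervalIntegrable y' volume 0 t := fun t ht =>
    hint.mono_set (Set.uIcc_subset_uIcc Set.left_mem_uIcc (Set.Icc_subset_uIcc ht))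
  rw [← integral_interval_sub_left (hsub x hx) (hsub p hp), hy x hx, hy p hp]
  ring

theorem isH1_of_eqOn_duhamel {p a : ℝ} {g y : ℝ → ℂ} (hp : p ∈ Set.Icc (0 : ℝ) 1) (hg : MemL2 g)
    (hy : Set.EqOn y (duhamel p a g) (Set.Icc 0 1)) : IsH1 y fun x => g x - a * y x := by
  have h0 : (0 : ℝ) ∈ Set.Icc (0 : ℝ) 1 := Set.left_mem_Icc.2 zero_le_one
  have h1 : (1 : ℝ) ∈ Set.Icc (0 : ℝ) 1 := Set.right_mem_Icc.2 zero_le_one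
  have hcont : ContinuousOn y (Set.Icc 0 1) := by
    rw [← Set.uIcc_of_le zero_le_one] at hp hy ⊢
    exact (continuousOn_duhamel a hp (hg.intervalIntegrable h0 h1)).congr hy
  have hy' : MemL2 fun x => g x - a * y x := hg.sub_const_mul (memL2_of_continuousOn hcont) a
  have heq : ∀ x ∈ Set.Icc (0 : ℝ) 1, y x = ∫ t in p..x, (g t - a * y t) := by
    intro x hx
    rw [hy hx, duhamel_eq_integral a (hg.intervalIntegrable hp hx)]
    refine integral_congr fun t ht => ?_
    simp only [hy (Set.uIcc_subset_Icc hp hx ht), Complex.real_smul]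
  refine ⟨hcont, hy'.intervalIntegrable h0 h1, hy'.2, fun x hx => ?_⟩
  rw [heq x hx, heq 0 h0,
    integral_add_adjacent_intervals (hy'.intervalIntegrable hp h0) (hy'.intervalIntegrable h0 hx)]

theorem exists_isH1_iff_eqOn_duhamel {p a : ℝ} {g y : ℝ → ℂ} (hp : p ∈ Set.Icc (0 : ℝ) 1)
    (hg : MemL2 g) :
    (∃ y', IsH1 y y' ∧ y p = 0 ∧
      ∀ᵐ x ∂volume.restrict (Set.Icc (0 : ℝ) 1), y' x + a * y x = g x) ↔
      Set.EqOn y (duhamel p a g) (Set.Icc 0 1) := by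
  constructor
  · rintro ⟨y', hy, hyp, heq⟩ x hx
    have hsub : Set.uIcc p x ⊆ Set.Icc 0 1 := Set.uIcc_subset_Icc hp hx
    have hy' : IntervalIntegrable y' volume p x :=
      hy.2.1.mono_set (hsub.trans Set.Icc_subset_uIcc)
    refine eq_duhamel_of_eq_integral hy' (fun t ht => ?_) ?_
    · rw [hy.eq_add_integral hp (hsub ht), hyp, zero_add]
    · filter_upwards [(ae_restrict_iff' measurableSet_Icc).1 heq] with t ht hmem
      exact ht (hsub (Set.uIoc_subset_uIcc hmem))
  · refine fun hy => ⟨_, isH1_of_eqOn_duhamel hp hg hy, ?_, ae_of_all _ fun x => ?_⟩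
    · rw [hy hp, duhamel, integral_same]
    · exact sub_add_cancel _ _

end UnitInterval

section TransportResolvent

/-- The space `L²([0,1]; ℂ)`. -/
abbrev L2UnitInterval : Type := Lp ℂ 2 (volume.restrict (Set.Icc (0 : ℝ) 1))

/-- The class in `L²([0,1]; ℂ)` of a square integrable function. -/
noncomputable def MemL2.toL2 {f : ℝ → ℂ} (hf : MemL2 f) : L2UnitInterval :=
  (memL2_iff_memLp.1 hf).toLp

lemma MemL2.coeFn_toL2 {f : ℝ → ℂ} (hf : MemL2 f) :
    hf.toL2 =ᵐ[volume.restrict (Set.Icc (0 : ℝ) 1)] f :=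
  (memL2_iff_memLp.1 hf).coeFn_toLp

lemma memL2_coeFn (g : L2UnitInterval) : MemL2 g :=
  memL2_iff_memLp.2 (Lp.memLp g)

lemma ae_mem_uIoc_of_ae_restrict_Icc {P : ℝ → Prop} (p x : unitInterval)
    (h : ∀ᵐ t ∂volume.restrict (Set.Icc (0 : ℝ) 1), P t) :
    ∀ᵐ t, t ∈ Set.uIoc (p : ℝ) x → P t :=
  ((ae_restrict_iff' measurableSet_Icc).1 h).mono fun _ ht hmem =>
    ht (Set.uIcc_subset_Icc p.2 x.2 (Set.uIoc_subset_uIcc hmem))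

/-- `duhamel p a` as a linear map from `L²([0,1]; ℂ)` to `C([0,1]; ℂ)`. -/
noncomputable def duhamelLinearMap (p : unitInterval) (a : ℝ) :
    L2UnitInterval →ₗ[ℂ] C(unitInterval, ℂ) where
  toFun g := ⟨fun x => duhamel p a g x, ((continuousOn_duhamel a (Set.Icc_subset_uIcc p.2)
    ((memL2_coeFn g).intervalIntegrable unitInterval.zero_mem unitInterval.one_mem)).mono
      Set.Icc_subset_uIcc).domRestrict⟩
  map_add' g₁ g₂ := by
    ext x
    exact (duhamel_congr_ae a (ae_mem_uIoc_of_ae_restrict_Icc p x (Lp.coeFn_add g₁ g₂))).trans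
      (duhamel_add a ((memL2_coeFn g₁).intervalIntegrable p.2 x.2)
        ((memL2_coeFn g₂).intervalIntegrable p.2 x.2))
  map_smul' c g := by
    ext x
    exact (duhamel_congr_ae a (ae_mem_uIoc_of_ae_restrict_Icc p x (Lp.coeFn_smul c g))).trans
      (duhamel_const_smul p a c g x)

/-- The solution operator `G ↦ y` of the scalar transport problem `lam y + u y' = G`, `y p = 0`
on `[0,1]`. -/
noncomputable def transportResolvent (p : unitInterval) (u lam : ℝ) :
    L2UnitInterval →ₗ[ℂ] C(unitInterval, ℂ) :=
  (u⁻¹ : ℂ) • duhamelLinearMap p (lam / u)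

lemma transportResolvent_apply (p : unitInterval) (u lam : ℝ) (G : L2UnitInterval)
    (x : unitInterval) :
    transportResolvent p u lam G x = (u⁻¹ : ℂ) • duhamel p (lam / u) G x :=
  rfl

theorem exists_isH1_iff_eq_transportResolvent {p : unitInterval} {u lam : ℝ} (hu : u ≠ 0)
    {G : L2UnitInterval} {g y : ℝ → ℂ} (hG : G =ᵐ[volume.restrict (Set.Icc (0 : ℝ) 1)] g)
    {z : C(unitInterval, ℂ)} (hz : ∀ x : unitInterval, y x = z x) :
    (∃ y', IsH1 y y' ∧ y p = 0 ∧
      ∀ᵐ x ∂volume.restrict (Set.Icc (0 : ℝ) 1), lam * y x + u * y' x = g x) ↔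
      z = transportResolvent p u lam G := by
  have hu' : (u : ℂ) ≠ 0 := by exact_mod_cast hu
  have hgL2 : MemL2 fun x => (u⁻¹ : ℂ) • g x :=
    memL2_iff_memLp.2 (((Lp.memLp G).ae_eq hG).const_smul (u⁻¹ : ℂ))
  have hscale : ∀ v w b : ℂ, lam * w + u * v = b ↔ v + (lam / u : ℝ) * w = (u⁻¹ : ℂ) • b := by
    intro v w b
    rw [smul_eq_mul, eq_inv_mul_iff_mul_eq₀ hu', mul_add, Complex.ofReal_div, ← mul_assoc,
      mul_div_cancel₀ _ hu', add_comm]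
  have hvalue : ∀ x : unitInterval, transportResolvent p u lam G x =
      duhamel p (lam / u) (fun t => (u⁻¹ : ℂ) • g t) x := by
    intro x
    rw [transportResolvent_apply, duhamel_const_smul,
      duhamel_congr_ae _ (ae_mem_uIoc_of_ae_restrict_Icc p x hG)]
  simp only [hscale, exists_isH1_iff_eqOn_duhamel p.2 hgL2, ContinuousMap.ext_iff, ← hz, hvalue]
  exact ⟨fun h x => h x.2, fun h x hx => h ⟨x, hx⟩⟩

theorem norm_transportResolvent_le {p : unitInterval} {u lam : ℝ} (hu : u ≠ 0) (hlam : 0 < lam)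
    (hp : ∀ x : unitInterval, 0 ≤ u * (x - p)) (G : L2UnitInterval) :
    ‖transportResolvent p u lam G‖ ≤ (√(2 * lam * |u|))⁻¹ * ‖G‖ := by
  rw [ContinuousMap.norm_le _ (by positivity)]
  intro x
  have hsub : Set.uIoc (p : ℝ) x ⊆ Set.Icc 0 1 :=
    Set.uIoc_subset_uIcc.trans (Set.uIcc_subset_Icc p.2 x.2)
  have hG : MemLp G 2 (volume.restrict (Set.Icc (0 : ℝ) 1)) := Lp.memLp G
  have hpx : 0 ≤ lam / u * (x - p) := by
    have : lam / u * (x - p) = lam / u ^ 2 * (u * (x - p)) := by field_simp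
    rw [this]
    exact mul_nonneg (by positivity) (hp x)
  have hconst : √(2 * lam * |u|) = |u| * √(2 * |lam / u|) := by
    rw [← Real.sqrt_sq (abs_nonneg u), ← Real.sqrt_mul (sq_nonneg _), abs_div, abs_of_pos hlam,
      Real.sqrt_sq (abs_nonneg u)]
    congr 1
    field_simp
  calc ‖transportResolvent p u lam G x‖
      = |u|⁻¹ * ‖duhamel p (lam / u) G x‖ := by
        rw [transportResolvent_apply, norm_smul, norm_inv, Complex.norm_real, Real.norm_eq_abs]
    _ ≤ |u|⁻¹ * (√(∫ t in Set.uIoc (p : ℝ) x, ‖G t‖ ^ 2) / √(2 * |lam / u|)) := by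
        gcongr
        exact norm_duhamel_le (div_ne_zero hlam.ne' hu) hpx
          (hG.mono_measure (Measure.restrict_mono_set _ hsub))
    _ ≤ |u|⁻¹ * (√(∫ t in Set.Icc (0 : ℝ) 1, ‖G t‖ ^ 2) / √(2 * |lam / u|)) := by
        gcongr
        · exact ae_of_all _ fun t => by positivity
        · exact hG.integrable_norm_pow two_ne_zero
    _ = (√(2 * lam * |u|))⁻¹ * ‖G‖ := by
        rw [Lp.norm_def, toReal_eLpNorm_two hG, hconst, mul_inv, div_eq_inv_mul, mul_assoc]

end TransportResolvent

section Coupling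

lemma memL2_IccExtend (f : C(unitInterval, ℂ)) : MemL2 (Set.IccExtend zero_le_one f) :=
  memL2_of_continuousOn f.continuous.Icc_extend'.continuousOn

/-- The inclusion of `C([0,1]; ℂ)` in `L²([0,1]; ℂ)`. -/
noncomputable def continuousToL2 : C(unitInterval, ℂ) →L[ℂ] L2UnitInterval :=
  LinearMap.mkContinuous
    { toFun := fun f => (memL2_IccExtend f).toL2
      map_add' := fun _ _ => rfl
      map_smul' := fun _ _ => rfl }
    1 fun f => by
      refine (Lp.norm_le_of_ae_bound (norm_nonneg f) ?_).trans_eq (by simp [measureUnivNNReal])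
      filter_upwards [(memL2_IccExtend f).coeFn_toL2] with x hx
      exact (congrArg norm hx).trans_le (f.norm_coe_le_norm _)

lemma coeFn_continuousToL2 {f : C(unitInterval, ℂ)} {y : ℝ → ℂ}
    (hy : ∀ x : unitInterval, y x = f x) :
    continuousToL2 f =ᵐ[volume.restrict (Set.Icc (0 : ℝ) 1)] y := by
  filter_upwards [(memL2_IccExtend f).coeFn_toL2, ae_restrict_mem measurableSet_Icc] with x hx hmem
  exact hx.trans ((Set.IccExtend_of_mem _ _ hmem).trans (hy ⟨x, hmem⟩).symm)

/-- The part `z ↦ c (zʰ - zᶜ) + zᶜ(0) κ` of a resolvent equation that couples the components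
of `z`. -/
noncomputable def coupling (c : ℝ) (κ : L2UnitInterval) :
    C(unitInterval, ℂ) × C(unitInterval, ℂ) →L[ℂ] L2UnitInterval :=
  (c : ℂ) • continuousToL2 ∘L
      (ContinuousLinearMap.fst ℂ C(unitInterval, ℂ) C(unitInterval, ℂ) -
        ContinuousLinearMap.snd ℂ C(unitInterval, ℂ) C(unitInterval, ℂ)) +
    (ContinuousMap.evalCLM ℂ 0 ∘L
      ContinuousLinearMap.snd ℂ C(unitInterval, ℂ) C(unitInterval, ℂ)).smulRight κ

lemma coupling_apply (c : ℝ) (κ : L2UnitInterval) (z : C(unitInterval, ℂ) × C(unitInterval, ℂ)) :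
    coupling c κ z = (c : ℂ) • continuousToL2 (z.1 - z.2) + z.2 0 • κ :=
  rfl

lemma coeFn_toL2_sub_coupling {c : ℝ} {f κ zh zc : ℝ → ℂ} (hf : MemL2 f) (hκ : MemL2 κ)
    {z : C(unitInterval, ℂ) × C(unitInterval, ℂ)}
    (hzh : ∀ x : unitInterval, zh x = z.1 x) (hzc : ∀ x : unitInterval, zc x = z.2 x) :
    ⇑(hf.toL2 - coupling c hκ.toL2 z) =ᵐ[volume.restrict (Set.Icc (0 : ℝ) 1)]
      fun x => f x - (c * (zh x - zc x) + zc 0 * κ x) := by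
  have hz : ∀ x : unitInterval, zh x - zc x = (z.1 - z.2) x := fun x => by
    rw [hzh, hzc, ContinuousMap.sub_apply]
  rw [coupling_apply, ← hzc 0, Set.Icc.coe_zero]
  filter_upwards [Lp.coeFn_sub hf.toL2 ((c : ℂ) • continuousToL2 (z.1 - z.2) + zc 0 • hκ.toL2),
    Lp.coeFn_add ((c : ℂ) • continuousToL2 (z.1 - z.2)) (zc 0 • hκ.toL2),
    Lp.coeFn_smul (c : ℂ) (continuousToL2 (z.1 - z.2)), Lp.coeFn_smul (zc 0) hκ.toL2,
    coeFn_continuousToL2 (y := fun x => zh x - zc x) hz, hf.coeFn_toL2, hκ.coeFn_toL2]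
    with x hsub hadd hsmul hsmul' hincl hfx hκx
  rw [hsub, Pi.sub_apply, hadd, Pi.add_apply, hsmul, hsmul', Pi.smul_apply, Pi.smul_apply, hincl,
    hfx, hκx, smul_eq_mul, smul_eq_mul]

end Coupling

section Resolvent

/-- The solution operator of the decoupled resolvent equations `lam zʰ + u₁ (zʰ)' = Fʰ`,
`lam zᶜ - u₂ (zᶜ)' = Fᶜ` with `zʰ 0 = 0` and `zᶜ 1 = 0`. -/
noncomputable def decoupledResolvent (u₁ u₂ lam : ℝ) :
    L2UnitInterval × L2UnitInterval →ₗ[ℂ] C(unitInterval, ℂ) × C(unitInterval, ℂ) :=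
  (transportResolvent 0 u₁ lam).prodMap (transportResolvent 1 (-u₂) lam)

/-- The coupling terms of both resolvent equations, which `decoupledResolvent` leaves out. -/
noncomputable def perturbation (c₁ c₂ : ℝ) (κh κc : L2UnitInterval) :
    C(unitInterval, ℂ) × C(unitInterval, ℂ) →L[ℂ] L2UnitInterval × L2UnitInterval :=
  (coupling c₁ κh).prod (coupling (-c₂) κc)

theorem norm_decoupledResolvent_le {u₁ u₂ lam : ℝ} (hu₁ : 0 < u₁) (hu₂ : 0 < u₂) (hlam : 0 < lam)
    (F : L2UnitInterval × L2UnitInterval) :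
    ‖decoupledResolvent u₁ u₂ lam F‖ ≤ (√(2 * lam * min u₁ u₂))⁻¹ * ‖F‖ := by
  refine norm_prod_le_iff.2 ⟨?_, ?_⟩
  · calc ‖transportResolvent 0 u₁ lam F.1‖ ≤ (√(2 * lam * |u₁|))⁻¹ * ‖F.1‖ :=
          norm_transportResolvent_le hu₁.ne' hlam
            (fun x => mul_nonneg hu₁.le (by simpa using x.2.1)) F.1
      _ ≤ (√(2 * lam * min u₁ u₂))⁻¹ * ‖F‖ := by
          gcongr
          · exact (min_le_left _ _).trans (le_abs_self _)
          · exact norm_fst_le F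
  · calc ‖transportResolvent 1 (-u₂) lam F.2‖ ≤ (√(2 * lam * |-u₂|))⁻¹ * ‖F.2‖ :=
          norm_transportResolvent_le (neg_ne_zero.2 hu₂.ne') hlam
            (fun x => mul_nonneg_of_nonpos_of_nonpos (neg_nonpos.2 hu₂.le)
              (by simpa using x.2.2)) F.2
      _ ≤ (√(2 * lam * min u₁ u₂))⁻¹ * ‖F‖ := by
          rw [abs_neg]
          gcongr
          · exact (min_le_right _ _).trans (le_abs_self _)
          · exact norm_snd_le F

lemma isResolventSol_iff {u₁ u₂ c₁ c₂ lam : ℝ} {κh κc fh fc zh zc zh' zc' : ℝ → ℂ} :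
    IsResolventSol u₁ u₂ c₁ c₂ κh κc lam fh fc zh zc zh' zc' ↔
      (IsH1 zh zh' ∧ zh 0 = 0 ∧ ∀ᵐ x ∂volume.restrict (Set.Icc (0 : ℝ) 1),
        lam * zh x + u₁ * zh' x = fh x - (c₁ * (zh x - zc x) + zc 0 * κh x)) ∧
      (IsH1 zc zc' ∧ zc 1 = 0 ∧ ∀ᵐ x ∂volume.restrict (Set.Icc (0 : ℝ) 1),
        lam * zc x + (-u₂ : ℝ) * zc' x =
          fc x - ((-c₂ : ℝ) * (zh x - zc x) + zc 0 * κc x)) := by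
  have hfst : ∀ x, lam * zh x + u₁ * zh' x + c₁ * (zh x - zc x) + zc 0 * κh x = fh x ↔
      lam * zh x + u₁ * zh' x = fh x - (c₁ * (zh x - zc x) + zc 0 * κh x) := fun x => by
    rw [eq_sub_iff_add_eq, add_assoc]
  have hsnd : ∀ x, lam * zc x - u₂ * zc' x - c₂ * (zh x - zc x) + zc 0 * κc x = fc x ↔
      lam * zc x + (-u₂ : ℝ) * zc' x = fc x - ((-c₂ : ℝ) * (zh x - zc x) + zc 0 * κc x) :=
    fun x => by
      rw [eq_sub_iff_add_eq, ← add_assoc]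
      simp only [Complex.ofReal_neg, neg_mul, ← sub_eq_add_neg]
  simp only [IsResolventSol, hfst, hsnd, Filter.eventually_and]
  tauto

theorem exists_isResolventSol_iff {u₁ u₂ c₁ c₂ lam : ℝ} (hu₁ : u₁ ≠ 0) (hu₂ : u₂ ≠ 0)
    {κh κc fh fc zh zc : ℝ → ℂ} (hκh : MemL2 κh) (hκc : MemL2 κc) (hfh : MemL2 fh)
    (hfc : MemL2 fc) {z : C(unitInterval, ℂ) × C(unitInterval, ℂ)}
    (hzh : ∀ x : unitInterval, zh x = z.1 x) (hzc : ∀ x : unitInterval, zc x = z.2 x) :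
    (∃ zh' zc', IsResolventSol u₁ u₂ c₁ c₂ κh κc lam fh fc zh zc zh' zc') ↔
      z = decoupledResolvent u₁ u₂ lam
        ((hfh.toL2, hfc.toL2) - perturbation c₁ c₂ hκh.toL2 hκc.toL2 z) := by
  have eqh := exists_isH1_iff_eq_transportResolvent (p := 0) (lam := lam) hu₁
    (coeFn_toL2_sub_coupling (c := c₁) hfh hκh hzh hzc) hzh
  have eqc := exists_isH1_iff_eq_transportResolvent (p := 1) (lam := lam) (neg_ne_zero.2 hu₂)
    (coeFn_toL2_sub_coupling (c := -c₂) hfc hκc hzh hzc) hzc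
  rw [Prod.ext_iff]
  simp only [isResolventSol_iff, exists_and_left, exists_and_right]
  exact and_congr eqh eqc

lemma exists_forall_ge_inv_sqrt_mul_lt_one {m : ℝ} (hm : 0 < m) (k : ℝ) :
    ∃ lamStar, 0 < lamStar ∧ ∀ lam, lamStar ≤ lam → (√(2 * lam * m))⁻¹ * k < 1 := by
  have hlim : Filter.Tendsto (fun lam : ℝ => (√(2 * lam * m))⁻¹ * k) .atTop (nhds (0 * k)) := by
    refine (Filter.Tendsto.inv_tendsto_atTop <| Real.tendsto_sqrt_atTop.comp ?_).mul_const k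
    exact (Filter.tendsto_id.const_mul_atTop two_pos).atTop_mul_const hm
  rw [zero_mul] at hlim
  obtain ⟨a, ha⟩ := Filter.eventually_atTop.1 (hlim.eventually_lt_const one_pos)
  exact ⟨max a 1, by positivity, fun lam hlam => ha lam ((le_max_left _ _).trans hlam)⟩

lemma norm_toL2_prod_le {fh fc : ℝ → ℂ} (hfh : MemL2 fh) (hfc : MemL2 fc) :
    ‖(hfh.toL2, hfc.toL2)‖ ≤ √(∫ x in (0 : ℝ)..1, (‖fh x‖ ^ 2 + ‖fc x‖ ^ 2)) := by
  have hnorm : ∀ {f : ℝ → ℂ} (hf : MemL2 f), ‖hf.toL2‖ = √(∫ x in (0 : ℝ)..1, ‖f x‖ ^ 2) := by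
    intro f hf
    rw [MemL2.toL2, Lp.norm_toLp, toReal_eLpNorm_two (memL2_iff_memLp.1 hf),
      integral_of_le zero_le_one, integral_Icc_eq_integral_Ioc]
  have hnonneg : ∀ f : ℝ → ℂ, 0 ≤ ∫ x in (0 : ℝ)..1, ‖f x‖ ^ 2 := fun f =>
    integral_nonneg zero_le_one fun x _ => by positivity
  rw [integral_add hfh.2 hfc.2, norm_prod_le_iff, hnorm, hnorm]
  exact ⟨Real.sqrt_le_sqrt (le_add_of_nonneg_right (hnonneg fc)),
    Real.sqrt_le_sqrt (le_add_of_nonneg_left (hnonneg fh))⟩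

lemma sqrt_integral_le_norm {zh zc : ℝ → ℂ} {z : C(unitInterval, ℂ) × C(unitInterval, ℂ)}
    (hzh : ∀ x : unitInterval, zh x = z.1 x) (hzc : ∀ x : unitInterval, zc x = z.2 x) :
    √(∫ x in (0 : ℝ)..1, (‖zh x‖ ^ 2 + ‖zc x‖ ^ 2)) ≤ √2 * ‖z‖ := by
  have hpoint : ∀ x ∈ Set.uIoc (0 : ℝ) 1, ‖‖zh x‖ ^ 2 + ‖zc x‖ ^ 2‖ ≤ 2 * ‖z‖ ^ 2 := by
    intro x hx
    have hx' : x ∈ unitInterval :=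
      Set.uIcc_subset_Icc unitInterval.zero_mem unitInterval.one_mem (Set.uIoc_subset_uIcc hx)
    rw [Real.norm_of_nonneg (by positivity), hzh ⟨x, hx'⟩, hzc ⟨x, hx'⟩, two_mul]
    gcongr
    · exact (z.1.norm_coe_le_norm _).trans (norm_fst_le z)
    · exact (z.2.norm_coe_le_norm _).trans (norm_snd_le z)
  have hint := (le_abs_self _).trans (norm_integral_le_of_norm_le_const hpoint)
  calc √(∫ x in (0 : ℝ)..1, (‖zh x‖ ^ 2 + ‖zc x‖ ^ 2)) ≤ √(2 * ‖z‖ ^ 2) :=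
        Real.sqrt_le_sqrt (by simpa using hint)
    _ = √2 * ‖z‖ := by rw [Real.sqrt_mul zero_le_two, Real.sqrt_sq (norm_nonneg z)]

lemma IsResolventSol.exists_continuousMap {u₁ u₂ c₁ c₂ lam : ℝ}
    {κh κc fh fc zh zc zh' zc' : ℝ → ℂ}
    (hz : IsResolventSol u₁ u₂ c₁ c₂ κh κc lam fh fc zh zc zh' zc') :
    ∃ z : C(unitInterval, ℂ) × C(unitInterval, ℂ),
      (∀ x : unitInterval, zh x = z.1 x) ∧ ∀ x : unitInterval, zc x = z.2 x :=
  ⟨(⟨_, hz.1.1.domRestrict⟩, ⟨_, hz.2.1.1.domRestrict⟩), fun _ => rfl, fun _ => rfl⟩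

theorem exists_isResolventSol_and_eqOn_and_le {u₁ u₂ c₁ c₂ lam r : ℝ} (hu₁ : u₁ ≠ 0)
    (hu₂ : u₂ ≠ 0) {κh κc fh fc : ℝ → ℂ} (hκh : MemL2 κh) (hκc : MemL2 κc) (hfh : MemL2 fh)
    (hfc : MemL2 fc) (hr : 0 ≤ r) (hR : ∀ F, ‖decoupledResolvent u₁ u₂ lam F‖ ≤ r * ‖F‖)
    (hK : r * ‖perturbation c₁ c₂ hκh.toL2 hκc.toL2‖ < 1) :
    ∃ zh zc zh' zc' : ℝ → ℂ,
      IsResolventSol u₁ u₂ c₁ c₂ κh κc lam fh fc zh zc zh' zc' ∧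
      (∀ wh wc wh' wc' : ℝ → ℂ,
        IsResolventSol u₁ u₂ c₁ c₂ κh κc lam fh fc wh wc wh' wc' →
          ∀ x ∈ Set.Icc (0 : ℝ) 1, wh x = zh x ∧ wc x = zc x) ∧
      √(∫ x in (0 : ℝ)..1, (‖zh x‖ ^ 2 + ‖zc x‖ ^ 2)) ≤
        √2 * (r / (1 - r * ‖perturbation c₁ c₂ hκh.toL2 hκc.toL2‖)) *
          √(∫ x in (0 : ℝ)..1, (‖fh x‖ ^ 2 + ‖fc x‖ ^ 2)) := by
  set K := perturbation c₁ c₂ hκh.toL2 hκc.toL2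
  obtain ⟨z, hz, huniq⟩ := existsUnique_eq_map_sub hR hr hK (hfh.toL2, hfc.toL2)
  have hzh := Set.IccExtend_val zero_le_one z.1
  have hzc := Set.IccExtend_val zero_le_one z.2
  obtain ⟨zh', zc', hsol⟩ :=
    (exists_isResolventSol_iff hu₁ hu₂ hκh hκc hfh hfc hzh hzc).2 hz
  refine ⟨_, _, zh', zc', hsol, fun wh wc wh' wc' hw x hx => ?_, ?_⟩
  · obtain ⟨w, hwh, hwc⟩ := hw.exists_continuousMap
    obtain rfl : w = z := huniq w <|
      (exists_isResolventSol_iff hu₁ hu₂ hκh hκc hfh hfc hwh hwc).1 ⟨wh', wc', hw⟩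
    lift x to unitInterval using hx
    exact ⟨(hwh x).trans (hzh x).symm, (hwc x).trans (hzc x).symm⟩
  · have hconst := div_nonneg hr (sub_pos.2 hK).le
    calc √(∫ x in (0 : ℝ)..1,
          (‖Set.IccExtend zero_le_one z.1 x‖ ^ 2 + ‖Set.IccExtend zero_le_one z.2 x‖ ^ 2))
        ≤ √2 * ‖z‖ := sqrt_integral_le_norm hzh hzc
      _ ≤ √2 * (r / (1 - r * ‖K‖) * ‖(hfh.toL2, hfc.toL2)‖) := by
          gcongr
          exact norm_le_of_eq_map_sub hR hr hK hz
      _ ≤ √2 * (r / (1 - r * ‖K‖) * √(∫ x in (0 : ℝ)..1, (‖fh x‖ ^ 2 + ‖fc x‖ ^ 2))) :=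
          mul_le_mul_of_nonneg_left
            (mul_le_mul_of_nonneg_left (norm_toL2_prod_le hfh hfc) hconst) (Real.sqrt_nonneg 2)
      _ = √2 * (r / (1 - r * ‖K‖)) * √(∫ x in (0 : ℝ)..1, (‖fh x‖ ^ 2 + ‖fc x‖ ^ 2)) :=
          (mul_assoc _ _ _).symm

end Resolvent

theorem resolvent_set_nonempty_general
    (u₁ u₂ c₁ c₂ : ℝ) (hu₁ : 0 < u₁) (hu₂ : 0 < u₂)
    (κh κc : ℝ → ℂ) (hκh : MemL2 κh) (hκc : MemL2 κc) :
    ∃ lamStar : ℝ, 0 < lamStar ∧ ∀ lam : ℝ, lamStar ≤ lam →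
      ∃ C : ℝ, 0 ≤ C ∧
        ∀ fh fc : ℝ → ℂ, MemL2 fh → MemL2 fc →
          (∃ zh zc zh' zc' : ℝ → ℂ,
            IsResolventSol u₁ u₂ c₁ c₂ κh κc lam fh fc zh zc zh' zc' ∧
            (∀ wh wc wh' wc' : ℝ → ℂ,
              IsResolventSol u₁ u₂ c₁ c₂ κh κc lam fh fc wh wc wh' wc' →
                ∀ x ∈ Set.Icc (0 : ℝ) 1, wh x = zh x ∧ wc x = zc x) ∧
            Real.sqrt (∫ x in (0 : ℝ)..1, (‖zh x‖ ^ 2 + ‖zc x‖ ^ 2))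
              ≤ C * Real.sqrt (∫ x in (0 : ℝ)..1, (‖fh x‖ ^ 2 + ‖fc x‖ ^ 2))) := by
  let K := perturbation c₁ c₂ hκh.toL2 hκc.toL2
  obtain ⟨lamStar, hpos, hsmall⟩ :=
    exists_forall_ge_inv_sqrt_mul_lt_one (lt_min hu₁ hu₂) ‖K‖
  refine ⟨lamStar, hpos, fun lam hlam => ?_⟩
  have hR := norm_decoupledResolvent_le hu₁ hu₂ (hpos.trans_le hlam)
  set r := (√(2 * lam * min u₁ u₂))⁻¹
  have hr : 0 ≤ r := by positivity
  have hK : r * ‖K‖ < 1 := hsmall lam hlam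
  have hC : 0 ≤ r / (1 - r * ‖K‖) := div_nonneg hr (sub_pos.2 hK).le
  exact ⟨√2 * (r / (1 - r * ‖K‖)), mul_nonneg (Real.sqrt_nonneg 2) hC, fun fh fc hfh hfc =>
    exists_isResolventSol_and_eqOn_and_le hu₁.ne' hu₂.ne' hκh hκc hfh hfc hr hR hK⟩

/-- there exists `λ* > 0` such that every real `λ ≥ λ*` belongs to the
resolvent set of `A − κC`: for every `f ∈ L²` the resolvent equations have a unique
solution `z ∈ D(A)`, with an `L²` bound `‖z‖ ≤ C_λ ‖f‖` uniform in `f`. -/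
theorem resolvent_set_nonempty
    (u₁ u₂ c₁ c₂ : ℝ) (hu₁ : 0 < u₁) (hu₂ : 0 < u₂) (hc₁ : 0 < c₁) (hc₂ : 0 < c₂)
    (κh κc : ℝ → ℂ) (hκh : MemL2 κh) (hκc : MemL2 κc) :
    ∃ lamStar : ℝ, 0 < lamStar ∧ ∀ lam : ℝ, lamStar ≤ lam →
      ∃ C : ℝ, 0 ≤ C ∧
        ∀ fh fc : ℝ → ℂ, MemL2 fh → MemL2 fc →
          (∃ zh zc zh' zc' : ℝ → ℂ,
            IsResolventSol u₁ u₂ c₁ c₂ κh κc lam fh fc zh zc zh' zc' ∧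
            (∀ wh wc wh' wc' : ℝ → ℂ,
              IsResolventSol u₁ u₂ c₁ c₂ κh κc lam fh fc wh wc wh' wc' →
                ∀ x ∈ Set.Icc (0:ℝ) 1, wh x = zh x ∧ wc x = zc x) ∧
            Real.sqrt (∫ x in (0:ℝ)..1, (‖zh x‖ ^ 2 + ‖zc x‖ ^ 2))
              ≤ C * Real.sqrt (∫ x in (0:ℝ)..1, (‖fh x‖ ^ 2 + ‖fc x‖ ^ 2))) :=
  resolvent_set_nonempty_general u₁ u₂ c₁ c₂ hu₁ hu₂ κh κc hκh hκc
end

section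
/- Let κ = (κ^h, κ^c) ∈ L²([0,1]; ℂ²). The operator A − κC is closed: if (z_n) is a sequence in D(A), z = (z^h, z^c) and y = (y^h, y^c) are in L²([0,1]; ℂ²), z_n → z in L², and w_n := A z_n − z_n^c(0)·κ → y in L², then z (after modification on a null set) belongs to D(A) and satisfies A z − z^c(0)·κ = y, i.e. −u₁ (z^h)' − c₁(z^h − z^c) − z^c(0)·κ^h = y^h and u₂ (z^c)' + c₂(z^h − z^c) − z^c(0)·κ^c = y^c almost everywhere on [0,1]. -/
open MeasureTheory intervalIntegral Filter

/-!
An `H¹` function is `z = z(0) + V z'` with `V` the Volterra operator, which is bounded on `L²`.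
Applying `V` to the second row `u₂ zₙ' + dₙ - γₙ κ → y`, where `zₙ = zₙ^c`, `γₙ = zₙ(0)` and `dₙ` is
the coupling term, eliminates the uncontrolled `zₙ'`: it shows that `γₙ • (u₂ + V κ)` converges in
`L²`. The continuous function `u₂ + V κ` takes the value `u₂ ≠ 0` at `0`, so it is nonzero in `L²`
and the boundary values `γₙ` converge. Then both rows give convergence of the derivatives in `L²`,
and the claim reduces to the closedness of `d/dx` on `H¹`.
-/

open scoped ENNReal Topology

theorem exists_tendsto_of_tendsto_smul_const {ι 𝕜 E : Type*} {l : Filter ι} [l.NeBot]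
    [NontriviallyNormedField 𝕜] [CompleteSpace 𝕜] [NormedAddCommGroup E] [NormedSpace 𝕜 E]
    {γ : ι → 𝕜} {φ v : E} (hφ : φ ≠ 0) (h : Tendsto (fun n => γ n • φ) l (𝓝 v)) :
    ∃ γ₀, Tendsto γ l (𝓝 γ₀) := by
  have hemb := isClosedEmbedding_smul_left (𝕜 := 𝕜) hφ
  obtain ⟨γ₀, rfl⟩ := hemb.isClosed_range.mem_of_tendsto h (.of_forall fun n => ⟨γ n, rfl⟩)
  exact ⟨γ₀, hemb.tendsto_nhds_iff.2 h⟩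

section RankOnePerturbation

variable {ι 𝕜 E F : Type*} {l : Filter ι} [NontriviallyNormedField 𝕜]
  [NormedAddCommGroup E] [NormedSpace 𝕜 E] {γ : ι → 𝕜} {g d : ι → E} {a : 𝕜} {κ w d₀ : E}

theorem exists_tendsto_trace_of_rankOne_perturbation [l.NeBot] [CompleteSpace 𝕜]
    [NormedAddCommGroup F] [NormedSpace 𝕜 F] (J : 𝕜 →L[𝕜] F) (V : E →L[𝕜] F) {z : F}
    (hκ : J a + V κ ≠ 0)
    (hz : Tendsto (fun n => J (γ n) + V (g n)) l (𝓝 z)) (hd : Tendsto d l (𝓝 d₀))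
    (hw : Tendsto (fun n => a • g n + d n - γ n • κ) l (𝓝 w)) : ∃ γ₀, Tendsto γ l (𝓝 γ₀) := by
  have hcancel (n : ι) :
      a • (J (γ n) + V (g n)) - V (a • g n + d n - γ n • κ - d n) = γ n • (J a + V κ) := by
    have hJ : a • J (γ n) = γ n • J a := by
      rw [← map_smul, ← map_smul, smul_eq_mul, smul_eq_mul, mul_comm]
    simp only [map_sub, map_add, map_smul, smul_add, hJ]
    abel
  refine exists_tendsto_of_tendsto_smul_const hκ (v := a • z - V (w - d₀)) ?_
  simpa only [← hcancel, Function.comp_def] using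
    (hz.const_smul a).sub ((V.continuous.tendsto _).comp (hw.sub hd))

theorem tendsto_deriv_of_rankOne_perturbation {γ₀ : 𝕜} (ha : a ≠ 0) (hγ : Tendsto γ l (𝓝 γ₀))
    (hd : Tendsto d l (𝓝 d₀)) (hw : Tendsto (fun n => a • g n + d n - γ n • κ) l (𝓝 w)) :
    Tendsto g l (𝓝 (a⁻¹ • (w - d₀ + γ₀ • κ))) := by
  refine (((hw.sub hd).add (hγ.smul_const κ)).const_smul a⁻¹).congr fun n => ?_
  rw [inv_smul_eq_iff₀ ha]
  abel

end RankOnePerturbation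

section SetIntegral

variable {α E : Type*} {m : MeasurableSpace α} {μ : Measure α} [IsFiniteMeasure μ]
  [NormedAddCommGroup E] [NormedSpace ℝ E] {p : ℝ≥0∞} [hp : Fact (1 ≤ p)]

theorem norm_setIntegral_le_mul_norm_Lp (f : Lp E p μ) (s : Set α) :
    ‖∫ x in s, f x ∂μ‖ ≤ μ.real Set.univ ^ (1 - 1 / p.toReal) * ‖f‖ := by
  have hexp : 0 ≤ 1 - 1 / p.toReal := by
    simpa [ENNReal.toReal_inv] using
      ENNReal.toReal_mono ENNReal.one_ne_top (ENNReal.inv_le_one.2 hp.out)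
  have hfin : eLpNorm f p μ * μ Set.univ ^ (1 - 1 / p.toReal) ≠ ∞ :=
    ENNReal.mul_ne_top (Lp.eLpNorm_ne_top f)
      (ENNReal.rpow_ne_top_of_nonneg hexp (measure_ne_top μ _))
  have hf : Integrable f μ := (Lp.memLp f).integrable hp.out
  calc ‖∫ x in s, f x ∂μ‖ ≤ ∫ x in s, ‖f x‖ ∂μ := norm_integral_le_integral_norm _
    _ ≤ ∫ x, ‖f x‖ ∂μ := setIntegral_le_integral hf.norm (.of_forall fun x => norm_nonneg _)
    _ = (eLpNorm f 1 μ).toReal := by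
      rw [eLpNorm_one_eq_lintegral_enorm, integral_norm_eq_lintegral_enorm hf.1]
    _ ≤ (eLpNorm f p μ * μ Set.univ ^ (1 - 1 / p.toReal)).toReal :=
      ENNReal.toReal_mono hfin <| by
        simpa using eLpNorm_le_eLpNorm_mul_rpow_measure_univ hp.out hf.1
    _ = μ.real Set.univ ^ (1 - 1 / p.toReal) * ‖f‖ := by
      rw [ENNReal.toReal_mul, ← ENNReal.toReal_rpow, Lp.norm_def, mul_comm, Measure.real]

variable (𝕜 : Type*) [NormedField 𝕜] [NormedSpace 𝕜 E] [SMulCommClass ℝ 𝕜 E]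

/-- Integration over a fixed set, as a bounded operator on `Lᵖ` of a finite measure. -/
noncomputable def setIntegralCLM (s : Set α) : Lp E p μ →L[𝕜] E :=
  LinearMap.mkContinuous
    { toFun := fun f => ∫ x in s, f x ∂μ
      map_add' := fun f g => by
        have hint (h : Lp E p μ) : Integrable h (μ.restrict s) :=
          ((Lp.memLp h).integrable hp.out).restrict
        rw [← integral_add (hint f) (hint g)]
        exact integral_congr_ae (ae_restrict_of_ae (Lp.coeFn_add f g))
      map_smul' := fun c f => by
        rw [RingHom.id_apply, ← MeasureTheory.integral_smul]
        exact integral_congr_ae (ae_restrict_of_ae (Lp.coeFn_smul c f)) }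
    (μ.real Set.univ ^ (1 - 1 / p.toReal)) fun f => norm_setIntegral_le_mul_norm_Lp f s

theorem setIntegralCLM_toLp {g : α → E} (hg : MemLp g p μ) (s : Set α) :
    setIntegralCLM 𝕜 s (hg.toLp g) = ∫ x in s, g x ∂μ :=
  integral_congr_ae (ae_restrict_of_ae hg.coeFn_toLp)

end SetIntegral

section Primitive

variable {E : Type*} [NormedAddCommGroup E] [NormedSpace ℝ E] {p : ℝ≥0∞} [hp : Fact (1 ≤ p)]
  {a b : ℝ}

theorem intervalIntegrable_of_memLp_Ioc {E : Type*} [NormedAddCommGroup E] (hab : a ≤ b)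
    {g : ℝ → E} (hg : MemLp g p (volume.restrict (Set.Ioc a b))) :
    IntervalIntegrable g volume a b :=
  (intervalIntegrable_iff_integrableOn_Ioc_of_le hab).2 (hg.integrable hp.out)

theorem continuousOn_primitive_of_memLp_Ioc (hab : a ≤ b) {g : ℝ → E}
    (hg : MemLp g p (volume.restrict (Set.Ioc a b))) :
    ContinuousOn (fun x => ∫ t in a..x, g t) (Set.Icc a b) := by
  simpa only [Set.uIcc_of_le hab] using
    continuousOn_primitive_interval' (intervalIntegrable_of_memLp_Ioc hab hg) Set.left_mem_uIcc

variable (𝕜 : Type*) [NormedField 𝕜] [NormedSpace 𝕜 E] [SMulCommClass ℝ 𝕜 E]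

theorem setIntegralCLM_Ioc_toLp {x : ℝ} (hx : x ∈ Set.Icc a b) {g : ℝ → E}
    (hg : MemLp g p (volume.restrict (Set.Ioc a b))) :
    setIntegralCLM 𝕜 (Set.Ioc a x) (hg.toLp g) = ∫ t in a..x, g t := by
  rw [setIntegralCLM_toLp, integral_of_le hx.1, Measure.restrict_restrict measurableSet_Ioc,
    Set.inter_eq_left.2 (Set.Ioc_subset_Ioc le_rfl hx.2)]

theorem memLp_setIntegralCLM_Ioc (f : Lp E p (volume.restrict (Set.Ioc a b))) :
    MemLp (fun x => setIntegralCLM 𝕜 (Set.Ioc a x) f) p (volume.restrict (Set.Ioc a b)) := by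
  have hcont : ContinuousOn (fun x => setIntegralCLM 𝕜 (Set.Ioc a x) f) (Set.Ioc a b) := by
    intro x hx
    have hab := (hx.1.trans_le hx.2).le
    refine ((continuousOn_primitive_of_memLp_Ioc hab (Lp.memLp f)).mono Set.Ioc_subset_Icc_self
      |>.congr fun y hy => ?_) x hx
    rw [← setIntegralCLM_Ioc_toLp 𝕜 (Set.Ioc_subset_Icc_self hy) (Lp.memLp f), Lp.toLp_coeFn]
  exact .of_bound (hcont.aestronglyMeasurable measurableSet_Ioc) _
    (.of_forall fun x => norm_setIntegral_le_mul_norm_Lp f (Set.Ioc a x))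

variable (a b) in
/-- The Volterra operator `f ↦ (x ↦ ∫ₐˣ f)` on `Lᵖ(a, b)`. -/
noncomputable def primitiveCLM :
    Lp E p (volume.restrict (Set.Ioc a b)) →L[𝕜] Lp E p (volume.restrict (Set.Ioc a b)) :=
  LinearMap.mkContinuousOfExistsBound
    { toFun := fun f => (memLp_setIntegralCLM_Ioc 𝕜 f).toLp
      map_add' := fun f g => by
        rw [← MemLp.toLp_add]
        simp only [map_add]
        rfl
      map_smul' := fun c f => by
        simp only [map_smul]
        rfl }
    ⟨_, fun f => by
      rw [mul_assoc]
      exact Lp.norm_le_of_ae_bound (by positivity)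
        ((memLp_setIntegralCLM_Ioc 𝕜 f).coeFn_toLp.mono fun x hx =>
          (congrArg norm hx).trans_le (norm_setIntegral_le_mul_norm_Lp f (Set.Ioc a x)))⟩

theorem coeFn_primitiveCLM_toLp {g : ℝ → E}
    (hg : MemLp g p (volume.restrict (Set.Ioc a b))) :
    primitiveCLM a b 𝕜 (hg.toLp g) =ᵐ[volume.restrict (Set.Ioc a b)]
      fun x => ∫ t in a..x, g t := by
  filter_upwards [(memLp_setIntegralCLM_Ioc 𝕜 (hg.toLp g)).coeFn_toLp,
    ae_restrict_mem measurableSet_Ioc] with x hx hxmem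
  exact hx.trans (setIntegralCLM_Ioc_toLp 𝕜 (Set.Ioc_subset_Icc_self hxmem) hg)

theorem coeFn_const_add_primitiveCLM_toLp (c : E) {g : ℝ → E}
    (hg : MemLp g p (volume.restrict (Set.Ioc a b))) :
    (Lp.const p (volume.restrict (Set.Ioc a b)) c + primitiveCLM a b 𝕜 (hg.toLp g) :
      Lp E p (volume.restrict (Set.Ioc a b))) =ᵐ[volume.restrict (Set.Ioc a b)]
      fun x => c + ∫ t in a..x, g t :=
  (Lp.coeFn_add _ _).trans ((Lp.coeFn_const p _ c).add (coeFn_primitiveCLM_toLp 𝕜 hg))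

theorem const_add_primitiveCLM_ne_zero (hab : a < b) {c : E} (hc : c ≠ 0)
    (f : Lp E p (volume.restrict (Set.Ioc a b))) :
    Lp.const p (volume.restrict (Set.Ioc a b)) c + primitiveCLM a b 𝕜 f ≠ 0 := by
  intro h0
  have hf := Lp.memLp f
  have hae : (fun x => c + ∫ t in a..x, f t) =ᵐ[volume.restrict (Set.Icc a b)] 0 := by
    rw [← Measure.restrict_congr_set Ioc_ae_eq_Icc]
    have h := coeFn_const_add_primitiveCLM_toLp 𝕜 c hf
    rw [Lp.toLp_coeFn, h0] at h
    exact h.symm.trans (Lp.coeFn_zero E p _)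
  have hcont := continuousOn_const (c := c).add (continuousOn_primitive_of_memLp_Ioc hab.le hf)
  have ha := Measure.eqOn_Icc_of_ae_eq volume hab.ne hae hcont continuousOn_const
    (Set.left_mem_Icc.2 hab.le)
  exact hc (by simpa using ha)

end Primitive

section L2Convergence

variable {ι α E F : Type*} {l : Filter ι} {m : MeasurableSpace α} {μ : Measure α}
  [NormedAddCommGroup E] [NormedAddCommGroup F]

theorem norm_toLp_two_sq {f : α → E} (hf : MemLp f 2 μ) :
    ‖hf.toLp f‖ ^ 2 = ∫ x, ‖f x‖ ^ 2 ∂μ := by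
  have hnonneg : 0 ≤ ∫ x, ‖f x‖ ^ 2 ∂μ := integral_nonneg fun x => sq_nonneg _
  rw [Lp.norm_toLp, hf.eLpNorm_eq_integral_rpow_norm two_ne_zero ENNReal.ofNat_ne_top,
    ENNReal.toReal_ofReal (by positivity), ENNReal.toReal_ofNat]
  simp only [Real.rpow_two]
  rw [← Real.rpow_mul_natCast hnonneg]
  norm_num

theorem tendsto_toLp_of_tendsto_integral_sq {f : ι → α → E} {g : α → E}
    (hf : ∀ n, MemLp (f n) 2 μ) (hg : MemLp g 2 μ)
    (h : Tendsto (fun n => ∫ x, ‖f n x - g x‖ ^ 2 ∂μ) l (𝓝 0)) :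
    Tendsto (fun n => (hf n).toLp (f n)) l (𝓝 (hg.toLp g)) := by
  have hsq (n : ι) : ‖(hf n).toLp (f n) - hg.toLp g‖ ^ 2 = ∫ x, ‖f n x - g x‖ ^ 2 ∂μ := by
    rw [← MemLp.toLp_sub, norm_toLp_two_sq]
    rfl
  rw [tendsto_iff_norm_sub_tendsto_zero]
  simpa only [← hsq, Real.sqrt_sq (norm_nonneg _), Real.sqrt_zero] using h.sqrt

theorem tendsto_toLp_of_tendsto_integral_sq_add {f₁ : ι → α → E} {f₂ : ι → α → F}
    {g₁ : α → E} {g₂ : α → F} (hf₁ : ∀ n, MemLp (f₁ n) 2 μ) (hf₂ : ∀ n, MemLp (f₂ n) 2 μ)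
    (hg₁ : MemLp g₁ 2 μ) (hg₂ : MemLp g₂ 2 μ)
    (h : Tendsto (fun n => ∫ x, (‖f₁ n x - g₁ x‖ ^ 2 + ‖f₂ n x - g₂ x‖ ^ 2) ∂μ) l (𝓝 0)) :
    Tendsto (fun n => (hf₁ n).toLp (f₁ n)) l (𝓝 (hg₁.toLp g₁)) ∧
      Tendsto (fun n => (hf₂ n).toLp (f₂ n)) l (𝓝 (hg₂.toLp g₂)) := by
  have hint (n : ι) := ((hf₁ n).sub hg₁).integrable_norm_pow two_ne_zero
  have hint' (n : ι) := ((hf₂ n).sub hg₂).integrable_norm_pow two_ne_zero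
  constructor
  · refine tendsto_toLp_of_tendsto_integral_sq hf₁ hg₁ (squeeze_zero
      (fun n => integral_nonneg fun x => sq_nonneg _) (fun n => ?_) h)
    exact integral_mono (hint n) ((hint n).add (hint' n))
      fun x => le_add_of_nonneg_right (sq_nonneg _)
  · refine tendsto_toLp_of_tendsto_integral_sq hf₂ hg₂ (squeeze_zero
      (fun n => integral_nonneg fun x => sq_nonneg _) (fun n => ?_) h)
    exact integral_mono (hint' n) ((hint n).add (hint' n))
      fun x => le_add_of_nonneg_left (sq_nonneg _)

end L2Convergence

/-- Lebesgue measure on the unit interval, restricted to the half-open interval `(0, 1]` over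
which `∫ x in 0..1` integrates. -/
noncomputable abbrev unitMeasure : Measure ℝ := volume.restrict (Set.Ioc 0 1)

theorem restrict_Icc_eq_unitMeasure : volume.restrict (Set.Icc (0 : ℝ) 1) = unitMeasure :=
  (Measure.restrict_congr_set Ioc_ae_eq_Icc).symm

theorem memLp_two_unitMeasure_iff {f : ℝ → ℂ} (hf : AEStronglyMeasurable f unitMeasure) :
    MemLp f 2 unitMeasure ↔ IntervalIntegrable (fun x => ‖f x‖ ^ 2) volume 0 1 := by
  rw [memLp_two_iff_integrable_sq_norm hf,
    intervalIntegrable_iff_integrableOn_Ioc_of_le zero_le_one, IntegrableOn]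

theorem MemL2.memLp {f : ℝ → ℂ} (hf : MemL2 f) : MemLp f 2 unitMeasure :=
  (memLp_two_unitMeasure_iff (restrict_Icc_eq_unitMeasure ▸ hf.1)).2 hf.2

theorem isH1_const_add_primitive {g : ℝ → ℂ} (c : ℂ) (hg : MemLp g 2 unitMeasure) :
    IsH1 (fun x => c + ∫ t in (0 : ℝ)..x, g t) g :=
  ⟨continuousOn_const.add (continuousOn_primitive_of_memLp_Ioc zero_le_one hg),
    intervalIntegrable_of_memLp_Ioc zero_le_one hg, (memLp_two_unitMeasure_iff hg.1).1 hg,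
    fun x _ => by simp only [integral_same, add_zero]⟩

namespace IsH1

theorem memLp {f f' : ℝ → ℂ} (h : IsH1 f f') : MemLp f 2 unitMeasure := by
  have hmeas : AEStronglyMeasurable f unitMeasure :=
    restrict_Icc_eq_unitMeasure ▸ h.1.aestronglyMeasurable measurableSet_Icc
  refine (memLp_two_unitMeasure_iff hmeas).2 (ContinuousOn.intervalIntegrable ?_)
  rw [Set.uIcc_of_le zero_le_one]
  exact h.1.norm.pow 2

theorem memLp_deriv {f f' : ℝ → ℂ} (h : IsH1 f f') : MemLp f' 2 unitMeasure :=
  (memLp_two_unitMeasure_iff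
    ((intervalIntegrable_iff_integrableOn_Ioc_of_le zero_le_one).1 h.2.1).1).2 h.2.2.1

theorem toLp_eq_const_add_primitiveCLM {f f' : ℝ → ℂ} (h : IsH1 f f') :
    h.memLp.toLp f =
      Lp.const 2 unitMeasure (f 0) + primitiveCLM 0 1 ℂ (h.memLp_deriv.toLp f') := by
  refine Lp.ext (h.memLp.coeFn_toLp.trans (EventuallyEq.trans ?_
    (coeFn_const_add_primitiveCLM_toLp ℂ (f 0) h.memLp_deriv).symm))
  exact ae_restrict_of_forall_mem measurableSet_Ioc fun x hx =>
    h.2.2.2 x (Set.Ioc_subset_Icc_self hx)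

variable {ι : Type*} {l : Filter ι} {f f' : ι → ℝ → ℂ} {z g : ℝ → ℂ} {c : ℂ}

theorem tendsto_apply (hf : ∀ n, IsH1 (f n) (f' n)) (hg : MemLp g 2 unitMeasure)
    (hc : Tendsto (fun n => f n 0) l (𝓝 c))
    (hf' : Tendsto (fun n => (hf n).memLp_deriv.toLp (f' n)) l (𝓝 (hg.toLp g)))
    {x : ℝ} (hx : x ∈ Set.Icc (0 : ℝ) 1) :
    Tendsto (fun n => f n x) l (𝓝 (c + ∫ t in (0 : ℝ)..x, g t)) := by
  have hint := ((setIntegralCLM ℂ (Set.Ioc 0 x)).continuous.tendsto _).comp hf'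
  simp only [Function.comp_def, setIntegralCLM_Ioc_toLp ℂ hx] at hint
  simpa only [← (hf _).2.2.2 x hx] using hc.add hint

theorem ae_eq_of_tendsto_toLp [l.NeBot] (hf : ∀ n, IsH1 (f n) (f' n))
    (hg : MemLp g 2 unitMeasure) (hc : Tendsto (fun n => f n 0) l (𝓝 c))
    (hf' : Tendsto (fun n => (hf n).memLp_deriv.toLp (f' n)) l (𝓝 (hg.toLp g)))
    (hz : MemLp z 2 unitMeasure)
    (hfz : Tendsto (fun n => (hf n).memLp.toLp (f n)) l (𝓝 (hz.toLp z))) :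
    (fun x => c + ∫ t in (0 : ℝ)..x, g t) =ᵐ[unitMeasure] z := by
  have hlim := (((Lp.constL 2 unitMeasure ℂ).continuous.tendsto c).comp hc).add
    (((primitiveCLM 0 1 ℂ).continuous.tendsto _).comp hf')
  have heq : hz.toLp z = Lp.const 2 unitMeasure c + primitiveCLM 0 1 ℂ (hg.toLp g) := by
    refine tendsto_nhds_unique hfz (hlim.congr fun n => ?_)
    exact (hf n).toLp_eq_const_add_primitiveCLM.symm
  have hcoe := coeFn_const_add_primitiveCLM_toLp ℂ c hg
  rw [← heq] at hcoe
  exact hcoe.symm.trans hz.coeFn_toLp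

theorem exists_limit_of_rankOne_perturbation [l.NeBot] {a γ₀ : ℂ} {γ : ι → ℂ}
    {κ y d₀ : ℝ → ℂ} {d : ι → ℝ → ℂ} (ha : a ≠ 0) (hf : ∀ n, IsH1 (f n) (f' n))
    (hz : MemLp z 2 unitMeasure) (hκ : MemLp κ 2 unitMeasure) (hy : MemLp y 2 unitMeasure)
    (hd : ∀ n, MemLp (d n) 2 unitMeasure) (hd₀ : MemLp d₀ 2 unitMeasure)
    (hc : Tendsto (fun n => f n 0) l (𝓝 c)) (hγ : Tendsto γ l (𝓝 γ₀))
    (hfz : Tendsto (fun n => (hf n).memLp.toLp (f n)) l (𝓝 (hz.toLp z)))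
    (hdd₀ : Tendsto (fun n => (hd n).toLp (d n)) l (𝓝 (hd₀.toLp d₀)))
    (hw : Tendsto (fun n => a • (hf n).memLp_deriv.toLp (f' n) + (hd n).toLp (d n)
      - γ n • hκ.toLp κ) l (𝓝 (hy.toLp y))) :
    ∃ F F' : ℝ → ℂ, IsH1 F F' ∧ F 0 = c ∧ F =ᵐ[unitMeasure] z ∧
      (∀ x ∈ Set.Icc (0 : ℝ) 1, Tendsto (fun n => f n x) l (𝓝 (F x))) ∧
      ∀ x, a * F' x + d₀ x - γ₀ * κ x = y x := by
  have hF' : MemLp (a⁻¹ • (y - d₀ + γ₀ • κ)) 2 unitMeasure :=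
    ((hy.sub hd₀).add (hκ.const_smul γ₀)).const_smul a⁻¹
  have hlim : Tendsto (fun n => (hf n).memLp_deriv.toLp (f' n)) l (𝓝 hF'.toLp) :=
    tendsto_deriv_of_rankOne_perturbation ha hγ hdd₀ hw
  refine ⟨_, _, isH1_const_add_primitive c hF', by simp only [integral_same, add_zero],
    ae_eq_of_tendsto_toLp hf hF' hc hlim hz hfz,
    fun x hx => tendsto_apply hf hF' hc hlim hx, fun x => ?_⟩
  simp only [Pi.smul_apply, Pi.add_apply, Pi.sub_apply, smul_eq_mul, mul_inv_cancel_left₀ ha]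
  ring

end IsH1

theorem A_minus_kappaC_closed_general {ι : Type*} {l : Filter ι} [l.NeBot]
    (u₁ u₂ c₁ c₂ : ℂ) (hu₁ : u₁ ≠ 0) (hu₂ : u₂ ≠ 0)
    (κh κc : ℝ → ℂ) (hκh : MemL2 κh) (hκc : MemL2 κc)
    (zhn zcn zhn' zcn' : ι → ℝ → ℂ)
    (hH1 : ∀ n, IsH1 (zhn n) (zhn' n) ∧ IsH1 (zcn n) (zcn' n))
    (hbc : ∀ n, zhn n 0 = 0 ∧ zcn n 1 = 0)
    (zh zc yh yc : ℝ → ℂ)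
    (hz : MemL2 zh ∧ MemL2 zc) (hy : MemL2 yh ∧ MemL2 yc)
    (hzconv : Tendsto (fun n => ∫ x in (0 : ℝ)..1,
        (‖zhn n x - zh x‖ ^ 2 + ‖zcn n x - zc x‖ ^ 2)) l (𝓝 0))
    (hwconv : Tendsto (fun n => ∫ x in (0 : ℝ)..1,
        (‖(-u₁ * zhn' n x - c₁ * (zhn n x - zcn n x) - zcn n 0 * κh x) - yh x‖ ^ 2 +
         ‖(u₂ * zcn' n x + c₂ * (zhn n x - zcn n x) - zcn n 0 * κc x) - yc x‖ ^ 2)) l (𝓝 0)) :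
    ∃ Zh Zc Zh' Zc' : ℝ → ℂ,
      IsH1 Zh Zh' ∧ IsH1 Zc Zc' ∧ Zh 0 = 0 ∧ Zc 1 = 0 ∧
      (∀ᵐ x ∂(volume.restrict (Set.Icc (0 : ℝ) 1)), Zh x = zh x ∧ Zc x = zc x) ∧
      (∀ᵐ x ∂(volume.restrict (Set.Icc (0 : ℝ) 1)),
        -u₁ * Zh' x - c₁ * (Zh x - Zc x) - Zc 0 * κh x = yh x ∧
        u₂ * Zc' x + c₂ * (Zh x - Zc x) - Zc 0 * κc x = yc x) := by
  have hh (n : ι) := (hH1 n).1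
  have hc (n : ι) := (hH1 n).2
  have mzh := hz.1.memLp
  have mzc := hz.2.memLp
  have mdiff (n : ι) := (hh n).memLp.sub (hc n).memLp
  simp only [integral_of_le zero_le_one, sub_eq_add_neg (-u₁ * _) _, ← neg_mul c₁] at hzconv hwconv
  obtain ⟨hzh, hzc⟩ := tendsto_toLp_of_tendsto_integral_sq_add
    (fun n => (hh n).memLp) (fun n => (hc n).memLp) mzh mzc hzconv
  obtain ⟨hwh, hwc⟩ := tendsto_toLp_of_tendsto_integral_sq_add
    (fun n => (((hh n).memLp_deriv.const_mul (-u₁)).add ((mdiff n).const_mul (-c₁))).sub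
      (hκh.memLp.const_mul (zcn n 0)))
    (fun n => (((hc n).memLp_deriv.const_mul u₂).add ((mdiff n).const_mul c₂)).sub
      (hκc.memLp.const_mul (zcn n 0)))
    hy.1.memLp hy.2.memLp hwconv
  have hdc := (hzh.sub hzc).const_smul c₂
  obtain ⟨γ, hγ⟩ : ∃ γ, Tendsto (fun n => zcn n 0) l (𝓝 γ) :=
    exists_tendsto_trace_of_rankOne_perturbation (Lp.constL 2 unitMeasure ℂ) (primitiveCLM 0 1 ℂ)
      (const_add_primitiveCLM_ne_zero ℂ zero_lt_one hu₂ hκc.memLp.toLp)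
      (hzc.congr fun n => (hc n).toLp_eq_const_add_primitiveCLM) hdc hwc
  have hzh0 : Tendsto (fun n => zhn n 0) l (𝓝 0) := by
    simpa only [(hbc _).1] using tendsto_const_nhds
  obtain ⟨Zh, Zh', hZh, hZh0, hZhz, -, hZh'⟩ :=
    IsH1.exists_limit_of_rankOne_perturbation (neg_ne_zero.2 hu₁) hh mzh hκh.memLp hy.1.memLp
      (fun n => (mdiff n).const_mul (-c₁)) ((mzh.sub mzc).const_mul (-c₁)) hzh0 hγ hzh
      ((hzh.sub hzc).const_smul (-c₁)) hwh
  obtain ⟨Zc, Zc', hZc, hZc0, hZcz, hZclim, hZc'⟩ :=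
    IsH1.exists_limit_of_rankOne_perturbation hu₂ hc mzc hκc.memLp hy.2.memLp
      (fun n => (mdiff n).const_mul c₂) ((mzh.sub mzc).const_mul c₂) hγ hγ hzc hdc hwc
  have hZc1 := hZclim 1 (Set.right_mem_Icc.2 zero_le_one)
  simp only [(hbc _).2] at hZc1
  rw [restrict_Icc_eq_unitMeasure]
  refine ⟨Zh, Zc, Zh', Zc', hZh, hZc, hZh0, tendsto_nhds_unique hZc1 tendsto_const_nhds,
    hZhz.and hZcz, ?_⟩
  filter_upwards [hZhz, hZcz] with x hxh hxc
  rw [hxh, hxc, hZc0, ← hZh' x, ← hZc' x]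
  simp [sub_eq_add_neg]

/-- the operator `A − κC` is closed: if `z_n ∈ D(A)`, `z_n → z` in `L²`, and
`w_n := A z_n − z_n^c(0)·κ → y` in `L²`, then `z` (after modification on a null set)
belongs to `D(A)` and satisfies `A z − z^c(0)·κ = y` a.e. on `[0,1]`. -/
theorem A_minus_kappaC_closed
    (u₁ u₂ c₁ c₂ : ℝ) (hu₁ : 0 < u₁) (hu₂ : 0 < u₂) (hc₁ : 0 < c₁) (hc₂ : 0 < c₂)
    (κh κc : ℝ → ℂ) (hκh : MemL2 κh) (hκc : MemL2 κc)
    (zhn zcn zhn' zcn' : ℕ → ℝ → ℂ)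
    (hH1 : ∀ n, IsH1 (zhn n) (zhn' n) ∧ IsH1 (zcn n) (zcn' n))
    (hbc : ∀ n, zhn n 0 = 0 ∧ zcn n 1 = 0)
    (zh zc yh yc : ℝ → ℂ)
    (hz : MemL2 zh ∧ MemL2 zc) (hy : MemL2 yh ∧ MemL2 yc)
    (hzconv : Tendsto (fun n => ∫ x in (0:ℝ)..1,
        (‖zhn n x - zh x‖ ^ 2 + ‖zcn n x - zc x‖ ^ 2)) atTop (nhds 0))
    (hwconv : Tendsto (fun n => ∫ x in (0:ℝ)..1,
        (‖(-(u₁ : ℂ) * zhn' n x - (c₁ : ℂ) * (zhn n x - zcn n x) - zcn n 0 * κh x)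
            - yh x‖ ^ 2 +
         ‖((u₂ : ℂ) * zcn' n x + (c₂ : ℂ) * (zhn n x - zcn n x) - zcn n 0 * κc x)
            - yc x‖ ^ 2)) atTop (nhds 0)) :
    ∃ Zh Zc Zh' Zc' : ℝ → ℂ,
      IsH1 Zh Zh' ∧ IsH1 Zc Zc' ∧ Zh 0 = 0 ∧ Zc 1 = 0 ∧
      (∀ᵐ x ∂(volume.restrict (Set.Icc (0:ℝ) 1)), Zh x = zh x ∧ Zc x = zc x) ∧
      (∀ᵐ x ∂(volume.restrict (Set.Icc (0:ℝ) 1)),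
        -(u₁ : ℂ) * Zh' x - (c₁ : ℂ) * (Zh x - Zc x) - Zc 0 * κh x = yh x ∧
        (u₂ : ℂ) * Zc' x + (c₂ : ℂ) * (Zh x - Zc x) - Zc 0 * κc x = yc x) :=
  A_minus_kappaC_closed_general u₁ u₂ c₁ c₂ (Complex.ofReal_ne_zero.2 hu₁.ne')
    (Complex.ofReal_ne_zero.2 hu₂.ne') κh κc hκh hκc zhn zcn zhn' zcn' hH1 hbc zh zc yh yc hz hy
    hzconv hwconv
end

section
/- Fix λ₀ > 0 and let λ ∈ ℂ. If λ is an eigenvalue of the shifted operator A_s = A + λ₀·I, i.e. there exists a nonzero differentiable v = (v^h, v^c) : [0,1] → ℂ² with v^h(0) = 0 and v^c(1) = 0 satisfying −u₁ (v^h)' − c₁(v^h − v^c) = (λ − λ₀) v^h and u₂ (v^c)' + c₂(v^h − v^c) = (λ − λ₀) v^c on [0,1], then f(λ) = 0, where f(λ) := (u₁/c₁)(θ₁(λ) e^{θ₁(λ)} − θ₂(λ) e^{θ₂(λ)}) + ((λ − λ₀ + c₁)/c₁)(e^{θ₁(λ)} − e^{θ₂(λ)}). -/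
open Complex

/-- `θ₁, θ₂` are the two roots (with multiplicity, via Vieta's formulas) of the
characteristic equation `r² + a(λ) r + b(λ) = 0`, where
`a(λ) = ((u₂ − u₁)(λ − lam0) + u₂c₁ − u₁c₂)/(u₁u₂)` and
`b(λ) = −((λ − lam0)² + (λ − lam0)(c₁ + c₂))/(u₁u₂)`. -/
def CharRoots (u₁ u₂ c₁ c₂ lam0 : ℝ) (lam θ₁ θ₂ : ℂ) : Prop :=
  θ₁ + θ₂ = -((((u₂ : ℂ) - u₁) * (lam - (lam0 : ℂ)) + (u₂ : ℂ) * c₁ - (u₁ : ℂ) * c₂)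
      / ((u₁ : ℂ) * u₂)) ∧
  θ₁ * θ₂ = -(((lam - (lam0 : ℂ)) ^ 2 + (lam - (lam0 : ℂ)) * ((c₁ : ℂ) + c₂))
      / ((u₁ : ℂ) * u₂))

/-!
On the first component of an eigenfunction the system reads `(D - θ₁) (D - θ₂) v^h = 0`, so
`u₁ (D - θ₂) v^h` is a multiple of `e^{θ₁ x}`, and symmetrically with the roots exchanged. By the
first equation of the system these two functions are linear combinations of `v^h` and `v^c`, with no
derivatives. When `θ₁ ≠ θ₂` they determine `v`, so `v^h(0) = 0` forces `v^c(0) ≠ 0`. Evaluating both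
at `x = 1`, where `v^c = 0`, gives two expressions for `v^h(1)`, and eliminating `v^h(1)` and
`v^c(0)` yields the equation. When `θ₁ = θ₂`, both differences in `f` vanish.
-/

section LinearODE

variable {E : Type*} [NormedAddCommGroup E] [NormedSpace ℂ E]

lemma eq_exp_smul_of_hasDerivWithinAt_smul {f : ℝ → E} {k : ℂ} {a b : ℝ}
    (hf : ∀ x ∈ Set.Icc a b, HasDerivWithinAt f (k • f x) (Set.Icc a b) x) {x : ℝ}
    (hx : x ∈ Set.Icc a b) : f x = exp (k * (x - a)) • f a := by
  set g : ℝ → E := fun y ↦ exp (-(k * (y - a))) • f y with hg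
  have hg' : ∀ y ∈ Set.Icc a b, HasDerivWithinAt g 0 (Set.Icc a b) y := by
    intro y hy
    have hexponent : HasDerivAt (fun z : ℝ ↦ -(k * ((z : ℂ) - a))) (-(k * 1)) y :=
      ((ofRealCLM.hasDerivAt.sub_const (a : ℂ)).const_mul k).neg
    refine (hexponent.cexp.hasDerivWithinAt.smul (hf y hy)).congr_deriv ?_
    module
  have hconst : g x = g a :=
    constant_of_has_deriv_right_zero (fun y hy ↦ (hg' y hy).continuousWithinAt)
      (fun y hy ↦ (hg' y (Set.Ico_subset_Icc_self hy)).mono_of_mem_nhdsWithin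
        (Icc_mem_nhdsGE_of_mem hy)) x hx
  calc f x = exp (k * (x - a)) • g x := by simp [hg, smul_smul, ← exp_add]
    _ = exp (k * (x - a)) • f a := by rw [hconst]; simp [hg]

end LinearODE

/-- The roots `θ₁`, `θ₂` of the characteristic equation for complex coefficients, where `m` stands
for `λ - λ₀`. Vieta's formulas are multiplied by `u₁ u₂`, so that no division occurs. -/
structure IsCharRootPair (u₁ u₂ c₁ c₂ m θ₁ θ₂ : ℂ) : Prop where
  sum_eq : u₁ * u₂ * (θ₁ + θ₂) = -((u₂ - u₁) * m + u₂ * c₁ - u₁ * c₂)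
  prod_eq : u₁ * u₂ * (θ₁ * θ₂) = -(m ^ 2 + m * (c₁ + c₂))

/-- The eigenvalue equations on a set `s` for the pair `(vh, vc)` with derivatives `vh'`, `vc'`,
where the coefficients may be complex and `m` stands for `λ - λ₀`. Derivatives are taken within `s`,
hence are one-sided at the endpoints of an interval. -/
structure SolvesEigensystemOn (u₁ u₂ c₁ c₂ m : ℂ) (vh vc vh' vc' : ℝ → ℂ) (s : Set ℝ) : Prop where
  hasDerivWithinAt_vh : ∀ x ∈ s, HasDerivWithinAt vh (vh' x) s x
  hasDerivWithinAt_vc : ∀ x ∈ s, HasDerivWithinAt vc (vc' x) s x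
  vh_eq : ∀ x ∈ s, -u₁ * vh' x - c₁ * (vh x - vc x) = m * vh x
  vc_eq : ∀ x ∈ s, u₂ * vc' x + c₂ * (vh x - vc x) = m * vc x

/-- The combination of `vh` and `vc` that equals `u₁ (vh' - θ vh)` for solutions of the
eigensystem: the factor of the second-order equation for `vh` belonging to the root `θ`. -/
def rootFactor (u₁ c₁ m θ : ℂ) (vh vc : ℝ → ℂ) (x : ℝ) : ℂ :=
  c₁ * vc x - (m + c₁ + u₁ * θ) * vh x

section Eigensystem

variable {u₁ u₂ c₁ c₂ m θ₁ θ₂ : ℂ} {vh vc vh' vc' : ℝ → ℂ} {s : Set ℝ} {a b x : ℝ}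

lemma CharRoots.isCharRootPair {u₁ u₂ c₁ c₂ lam0 : ℝ} {lam θ₁ θ₂ : ℂ}
    (h : CharRoots u₁ u₂ c₁ c₂ lam0 lam θ₁ θ₂) (hu₁ : u₁ ≠ 0) (hu₂ : u₂ ≠ 0) :
    IsCharRootPair u₁ u₂ c₁ c₂ (lam - lam0) θ₁ θ₂ := by
  have hu : (u₁ * u₂ : ℂ) ≠ 0 := by exact_mod_cast mul_ne_zero hu₁ hu₂
  constructor
  · rw [h.1, mul_neg, mul_div_cancel₀ _ hu]
  · rw [h.2, mul_neg, mul_div_cancel₀ _ hu]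

lemma IsCharRootPair.symm (h : IsCharRootPair u₁ u₂ c₁ c₂ m θ₁ θ₂) :
    IsCharRootPair u₁ u₂ c₁ c₂ m θ₂ θ₁ :=
  ⟨add_comm θ₁ θ₂ ▸ h.sum_eq, mul_comm θ₁ θ₂ ▸ h.prod_eq⟩

lemma eq_zero_of_rootFactor_eq_zero (hu₁ : u₁ ≠ 0) (hc₁ : c₁ ≠ 0) (hne : θ₁ ≠ θ₂)
    (h₁ : rootFactor u₁ c₁ m θ₁ vh vc x = 0) (h₂ : rootFactor u₁ c₁ m θ₂ vh vc x = 0) :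
    vh x = 0 ∧ vc x = 0 := by
  unfold rootFactor at h₁ h₂
  have hvh : vh x = 0 := by
    refine (mul_eq_zero_iff_left (mul_ne_zero hu₁ (sub_ne_zero.mpr hne))).mp ?_
    linear_combination h₂ - h₁
  exact ⟨hvh, by simpa [hvh, hc₁] using h₁⟩

namespace SolvesEigensystemOn

lemma hasDerivWithinAt_rootFactor (h : SolvesEigensystemOn u₁ u₂ c₁ c₂ m vh vc vh' vc' s)
    (hu₁ : u₁ ≠ 0) (hu₂ : u₂ ≠ 0) (hθ : IsCharRootPair u₁ u₂ c₁ c₂ m θ₁ θ₂) (hx : x ∈ s) :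
    HasDerivWithinAt (rootFactor u₁ c₁ m θ₂ vh vc) (θ₁ * rootFactor u₁ c₁ m θ₂ vh vc x) s x := by
  refine (((h.hasDerivWithinAt_vc x hx).const_mul c₁).sub
    ((h.hasDerivWithinAt_vh x hx).const_mul (m + c₁ + u₁ * θ₂))).congr_deriv ?_
  apply mul_left_cancel₀ (mul_ne_zero hu₁ hu₂)
  unfold rootFactor
  linear_combination u₁ * c₁ * h.vc_eq x hx + u₂ * (m + c₁ + u₁ * θ₂) * h.vh_eq x hx
    - (c₁ * vc x - (m + c₁) * vh x) * hθ.sum_eq + u₁ * vh x * hθ.prod_eq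

lemma rootFactor_eq_exp_mul
    (h : SolvesEigensystemOn u₁ u₂ c₁ c₂ m vh vc vh' vc' (Set.Icc a b))
    (hu₁ : u₁ ≠ 0) (hu₂ : u₂ ≠ 0) (hθ : IsCharRootPair u₁ u₂ c₁ c₂ m θ₁ θ₂)
    (hx : x ∈ Set.Icc a b) :
    rootFactor u₁ c₁ m θ₂ vh vc x = exp (θ₁ * (x - a)) * rootFactor u₁ c₁ m θ₂ vh vc a :=
  eq_exp_smul_of_hasDerivWithinAt_smul
    (fun _ hy ↦ h.hasDerivWithinAt_rootFactor hu₁ hu₂ hθ hy) hx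

lemma eq_zero_of_left_eq_zero
    (h : SolvesEigensystemOn u₁ u₂ c₁ c₂ m vh vc vh' vc' (Set.Icc a b))
    (hu₁ : u₁ ≠ 0) (hu₂ : u₂ ≠ 0) (hc₁ : c₁ ≠ 0)
    (hθ : IsCharRootPair u₁ u₂ c₁ c₂ m θ₁ θ₂) (hne : θ₁ ≠ θ₂)
    (hvh : vh a = 0) (hvc : vc a = 0) (hx : x ∈ Set.Icc a b) : vh x = 0 ∧ vc x = 0 := by
  have hleft (θ : ℂ) : rootFactor u₁ c₁ m θ vh vc a = 0 := by simp [rootFactor, hvh, hvc]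
  apply eq_zero_of_rootFactor_eq_zero hu₁ hc₁ hne
  · rw [h.rootFactor_eq_exp_mul hu₁ hu₂ hθ.symm hx, hleft, mul_zero]
  · rw [h.rootFactor_eq_exp_mul hu₁ hu₂ hθ hx, hleft, mul_zero]

lemma right_eq_exp_mul_left
    (h : SolvesEigensystemOn u₁ u₂ c₁ c₂ m vh vc vh' vc' (Set.Icc a b)) (hab : a ≤ b)
    (hu₁ : u₁ ≠ 0) (hu₂ : u₂ ≠ 0) (hθ : IsCharRootPair u₁ u₂ c₁ c₂ m θ₁ θ₂)
    (hvh : vh a = 0) (hvc : vc b = 0) :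
    -((m + c₁ + u₁ * θ₂) * vh b) = exp (θ₁ * (b - a)) * (c₁ * vc a) := by
  simpa [rootFactor, hvh, hvc] using
    h.rootFactor_eq_exp_mul hu₁ hu₂ hθ (Set.right_mem_Icc.mpr hab)

end SolvesEigensystemOn

end Eigensystem

theorem eigenvalue_implies_characteristic_eq_general
    {u₁ u₂ c₁ c₂ m θ₁ θ₂ : ℂ} (hu₁ : u₁ ≠ 0) (hu₂ : u₂ ≠ 0) (hc₁ : c₁ ≠ 0)
    (hθ : IsCharRootPair u₁ u₂ c₁ c₂ m θ₁ θ₂) {vh vc vh' vc' : ℝ → ℂ} {a b : ℝ}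
    (hv : SolvesEigensystemOn u₁ u₂ c₁ c₂ m vh vc vh' vc' (Set.Icc a b))
    (hvh : vh a = 0) (hvc : vc b = 0) (hnz : ∃ x ∈ Set.Icc a b, vh x ≠ 0 ∨ vc x ≠ 0) :
    u₁ / c₁ * (θ₁ * exp (θ₁ * (b - a)) - θ₂ * exp (θ₂ * (b - a)))
      + (m + c₁) / c₁ * (exp (θ₁ * (b - a)) - exp (θ₂ * (b - a))) = 0 := by
  obtain rfl | hne := eq_or_ne θ₁ θ₂
  · simp
  obtain ⟨x, hx, hvx⟩ := hnz
  have hab : a ≤ b := hx.1.trans hx.2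
  have hvca : vc a ≠ 0 := fun hvca ↦ by
    obtain ⟨hvhx, hvcx⟩ := hv.eq_zero_of_left_eq_zero hu₁ hu₂ hc₁ hθ hne hvh hvca hx
    exact hvx.elim (absurd hvhx) (absurd hvcx)
  have hright₁ := hv.right_eq_exp_mul_left hab hu₁ hu₂ hθ hvh hvc
  have hright₂ := hv.right_eq_exp_mul_left hab hu₁ hu₂ hθ.symm hvh hvc
  have hcross : (m + c₁ + u₁ * θ₁) * exp (θ₁ * (b - a))
      = (m + c₁ + u₁ * θ₂) * exp (θ₂ * (b - a)) := by
    apply mul_right_cancel₀ (mul_ne_zero hc₁ hvca)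
    linear_combination (m + c₁ + u₁ * θ₂) * hright₂ - (m + c₁ + u₁ * θ₁) * hright₁
  linear_combination hcross / c₁

/-- if `λ` is an eigenvalue of the shifted operator `A_s = A + lam0 I`
(witnessed by a nonzero differentiable eigenfunction `v` satisfying the boundary
conditions), then `f(λ) = 0` where
`f(λ) = (u₁/c₁)(θ₁ e^{θ₁} − θ₂ e^{θ₂}) + ((λ − lam0 + c₁)/c₁)(e^{θ₁} − e^{θ₂})`. -/
theorem eigenvalue_implies_characteristic_eq
    (u₁ u₂ c₁ c₂ lam0 : ℝ) (hu₁ : 0 < u₁) (hu₂ : 0 < u₂) (hc₁ : 0 < c₁) (hc₂ : 0 < c₂)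
    (hlam0 : 0 < lam0)
    (lam θ₁ θ₂ : ℂ) (hroots : CharRoots u₁ u₂ c₁ c₂ lam0 lam θ₁ θ₂)
    (vh vc vh' vc' : ℝ → ℂ)
    (hdh : ∀ x ∈ Set.Icc (0:ℝ) 1, HasDerivAt vh (vh' x) x)
    (hdc : ∀ x ∈ Set.Icc (0:ℝ) 1, HasDerivAt vc (vc' x) x)
    (hbc0 : vh 0 = 0) (hbc1 : vc 1 = 0)
    (heig : ∀ x ∈ Set.Icc (0:ℝ) 1,
      -(u₁ : ℂ) * vh' x - (c₁ : ℂ) * (vh x - vc x) = (lam - (lam0 : ℂ)) * vh x ∧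
      (u₂ : ℂ) * vc' x + (c₂ : ℂ) * (vh x - vc x) = (lam - (lam0 : ℂ)) * vc x)
    (hnz : ∃ x ∈ Set.Icc (0:ℝ) 1, vh x ≠ 0 ∨ vc x ≠ 0) :
    ((u₁ : ℂ) / c₁) * (θ₁ * Complex.exp θ₁ - θ₂ * Complex.exp θ₂)
      + ((lam - (lam0 : ℂ) + c₁) / c₁) * (Complex.exp θ₁ - Complex.exp θ₂) = 0 := by
  simpa using eigenvalue_implies_characteristic_eq_general (ofReal_ne_zero.mpr hu₁.ne')
    (ofReal_ne_zero.mpr hu₂.ne') (ofReal_ne_zero.mpr hc₁.ne')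
    (hroots.isCharRootPair hu₁.ne' hu₂.ne')
    ⟨fun x hx ↦ (hdh x hx).hasDerivWithinAt, fun x hx ↦ (hdc x hx).hasDerivWithinAt,
      fun x hx ↦ (heig x hx).1, fun x hx ↦ (heig x hx).2⟩ hbc0 hbc1 hnz
end

section
/- Fix λ₀ > 0 and let λ ∈ ℂ satisfy f(λ) = 0. Define v_λ = (v_λ^h, v_λ^c) : [0,1] → ℂ² by v_λ^h(x) = e^{θ₁(λ)x} − e^{θ₂(λ)x} and v_λ^c(x) = (u₁/c₁)(θ₁(λ) e^{θ₁(λ)x} − θ₂(λ) e^{θ₂(λ)x}) + ((λ − λ₀ + c₁)/c₁)(e^{θ₁(λ)x} − e^{θ₂(λ)x}). If v_λ is not identically zero, then v_λ^h(0) = 0, v_λ^c(1) = 0, and v_λ satisfies −u₁ (v_λ^h)' − c₁(v_λ^h − v_λ^c) = (λ − λ₀) v_λ^h and u₂ (v_λ^c)' + c₂(v_λ^h − v_λ^c) = (λ − λ₀) v_λ^c on [0,1]; that is, λ is an eigenvalue of A_s = A + λ₀·I with eigenfunction v_λ. -/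
/-!
The function `x ↦ (e^{θx}, s(θ) e^{θx})` satisfies the first equation exactly when
`s(θ) = (u₁θ + λ - λ₀ + c₁) / c₁`, and substituting this ratio into the second equation leaves the
characteristic quadratic for `θ`. The system is linear and `v_λ` is the difference of the two modes
belonging to the two roots, so it is a solution; taking the difference makes the first component
vanish at `0`, and `f(λ)` is the value of the second component at `1`.
-/

open Complex

/-- The candidate eigenfunction's first component `v_λ^h(x) = e^{θ₁x} − e^{θ₂x}`. -/
noncomputable def vlamh (θ₁ θ₂ : ℂ) : ℝ → ℂ := fun x =>
  Complex.exp (θ₁ * x) - Complex.exp (θ₂ * x)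

/-- The candidate eigenfunction's second component
`v_λ^c(x) = (u₁/c₁)(θ₁ e^{θ₁x} − θ₂ e^{θ₂x}) + ((λ − λ₀ + c₁)/c₁)(e^{θ₁x} − e^{θ₂x})`. -/
noncomputable def vlamc (u₁ c₁ lam0 : ℝ) (lam θ₁ θ₂ : ℂ) : ℝ → ℂ := fun x =>
  ((u₁ : ℂ) / c₁) * (θ₁ * Complex.exp (θ₁ * x) - θ₂ * Complex.exp (θ₂ * x))
    + ((lam - (lam0 : ℂ) + c₁) / c₁) * (Complex.exp (θ₁ * x) - Complex.exp (θ₂ * x))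

/-- The eigenvalue equations `A (h, c) = μ (h, c)` of the counterflow heat exchange operator `A`,
on the whole real line and without boundary conditions. Differentiability is part of the notion
because `deriv` is `0` at points where it fails. -/
structure IsHeatExchangeSolution (u₁ u₂ c₁ c₂ μ : ℂ) (h c : ℝ → ℂ) : Prop where
  differentiable_fst : Differentiable ℝ h
  differentiable_snd : Differentiable ℝ c
  eq_fst : ∀ x, -u₁ * deriv h x - c₁ * (h x - c x) = μ * h x
  eq_snd : ∀ x, u₂ * deriv c x + c₂ * (h x - c x) = μ * c x

/-- The ratio `s(θ)` of the second to the first component of a solution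
`x ↦ (e^{θx}, s(θ) e^{θx})`, as determined by the first equation of
`IsHeatExchangeSolution`. It is meaningful only for `c₁ ≠ 0`. -/
noncomputable def modeRatio (u₁ c₁ μ θ : ℂ) : ℂ :=
  (u₁ * θ + μ + c₁) / c₁

theorem hasDerivAt_cexp_mul_ofReal (θ : ℂ) (x : ℝ) :
    HasDerivAt (fun y : ℝ => exp (θ * y)) (θ * exp (θ * x)) x := by
  simpa [mul_comm] using ((hasDerivAt_id (x : ℂ)).const_mul θ).cexp.comp_ofReal

namespace IsHeatExchangeSolution

variable {u₁ u₂ c₁ c₂ μ : ℂ}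

theorem sub {h₁ k₁ h₂ k₂ : ℝ → ℂ} (sol₁ : IsHeatExchangeSolution u₁ u₂ c₁ c₂ μ h₁ k₁)
    (sol₂ : IsHeatExchangeSolution u₁ u₂ c₁ c₂ μ h₂ k₂) :
    IsHeatExchangeSolution u₁ u₂ c₁ c₂ μ (h₁ - h₂) (k₁ - k₂) where
  differentiable_fst := sol₁.differentiable_fst.sub sol₂.differentiable_fst
  differentiable_snd := sol₁.differentiable_snd.sub sol₂.differentiable_snd
  eq_fst x := by
    rw [deriv_sub (sol₁.differentiable_fst x) (sol₂.differentiable_fst x)]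
    simp only [Pi.sub_apply]
    linear_combination sol₁.eq_fst x - sol₂.eq_fst x
  eq_snd x := by
    rw [deriv_sub (sol₁.differentiable_snd x) (sol₂.differentiable_snd x)]
    simp only [Pi.sub_apply]
    linear_combination sol₁.eq_snd x - sol₂.eq_snd x

theorem cexp_of_characteristic_eq {θ : ℂ} (hc₁ : c₁ ≠ 0)
    (hθ : u₁ * u₂ * θ ^ 2 + ((u₂ - u₁) * μ + u₂ * c₁ - u₁ * c₂) * θ
      - (μ ^ 2 + μ * (c₁ + c₂)) = 0) :
    IsHeatExchangeSolution u₁ u₂ c₁ c₂ μ (fun x => exp (θ * x))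
      (fun x => modeRatio u₁ c₁ μ θ * exp (θ * x)) := by
  have deriv_fst (x : ℝ) := hasDerivAt_cexp_mul_ofReal θ x
  have deriv_snd (x : ℝ) := (deriv_fst x).const_mul (modeRatio u₁ c₁ μ θ)
  have ratio_mul : c₁ * modeRatio u₁ c₁ μ θ = u₁ * θ + μ + c₁ := mul_div_cancel₀ _ hc₁
  have ratio_eq : (u₂ * θ - c₂ - μ) * modeRatio u₁ c₁ μ θ + c₂ = 0 := by
    refine (mul_eq_zero_iff_left hc₁).mp ?_
    linear_combination (u₂ * θ - c₂ - μ) * ratio_mul + hθ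
  exact
    { differentiable_fst := fun x => (deriv_fst x).differentiableAt
      differentiable_snd := fun x => (deriv_snd x).differentiableAt
      eq_fst := fun x => by
        rw [(deriv_fst x).deriv]
        linear_combination exp (θ * x) * ratio_mul
      eq_snd := fun x => by
        rw [(deriv_snd x).deriv]
        linear_combination exp (θ * x) * ratio_eq }

end IsHeatExchangeSolution

namespace CharRoots

variable {u₁ u₂ c₁ c₂ lam0 : ℝ} {lam θ₁ θ₂ : ℂ}

theorem symm (hroots : CharRoots u₁ u₂ c₁ c₂ lam0 lam θ₁ θ₂) :
    CharRoots u₁ u₂ c₁ c₂ lam0 lam θ₂ θ₁ :=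
  ⟨(add_comm θ₂ θ₁).trans hroots.1, (mul_comm θ₂ θ₁).trans hroots.2⟩

theorem characteristic_eq (hu₁ : u₁ ≠ 0) (hu₂ : u₂ ≠ 0)
    (hroots : CharRoots u₁ u₂ c₁ c₂ lam0 lam θ₁ θ₂) :
    (u₁ : ℂ) * u₂ * θ₁ ^ 2 + ((u₂ - u₁) * (lam - lam0) + u₂ * c₁ - u₁ * c₂) * θ₁
      - ((lam - lam0) ^ 2 + (lam - lam0) * (c₁ + c₂)) = 0 := by
  have hu : (u₁ : ℂ) * u₂ ≠ 0 := mul_ne_zero (ofReal_ne_zero.mpr hu₁) (ofReal_ne_zero.mpr hu₂)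
  obtain ⟨hsum, hprod⟩ := hroots
  rw [← neg_div, eq_div_iff hu] at hsum hprod
  linear_combination θ₁ * hsum - hprod

end CharRoots

theorem vlamh_eq_sub (θ₁ θ₂ : ℂ) :
    vlamh θ₁ θ₂ = (fun x : ℝ => exp (θ₁ * x)) - fun x : ℝ => exp (θ₂ * x) :=
  rfl

theorem vlamc_eq_sub (u₁ c₁ lam0 : ℝ) (lam θ₁ θ₂ : ℂ) :
    vlamc u₁ c₁ lam0 lam θ₁ θ₂ =
      (fun x : ℝ => modeRatio u₁ c₁ (lam - lam0) θ₁ * exp (θ₁ * x)) -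
        fun x : ℝ => modeRatio u₁ c₁ (lam - lam0) θ₂ * exp (θ₂ * x) := by
  ext x
  simp only [vlamc, modeRatio, Pi.sub_apply]
  ring

theorem vlamh_zero (θ₁ θ₂ : ℂ) : vlamh θ₁ θ₂ 0 = 0 := by
  simp [vlamh]

theorem vlamc_one (u₁ c₁ lam0 : ℝ) (lam θ₁ θ₂ : ℂ) :
    vlamc u₁ c₁ lam0 lam θ₁ θ₂ 1 =
      (u₁ : ℂ) / c₁ * (θ₁ * exp θ₁ - θ₂ * exp θ₂)
        + (lam - lam0 + c₁) / c₁ * (exp θ₁ - exp θ₂) := by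
  simp [vlamc]

theorem CharRoots.isHeatExchangeSolution {u₁ u₂ c₁ c₂ lam0 : ℝ} {lam θ₁ θ₂ : ℂ}
    (hu₁ : u₁ ≠ 0) (hu₂ : u₂ ≠ 0) (hc₁ : c₁ ≠ 0)
    (hroots : CharRoots u₁ u₂ c₁ c₂ lam0 lam θ₁ θ₂) :
    IsHeatExchangeSolution u₁ u₂ c₁ c₂ (lam - lam0)
      (vlamh θ₁ θ₂) (vlamc u₁ c₁ lam0 lam θ₁ θ₂) := by
  have hc₁' : (c₁ : ℂ) ≠ 0 := ofReal_ne_zero.mpr hc₁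
  rw [vlamh_eq_sub, vlamc_eq_sub]
  exact .sub (.cexp_of_characteristic_eq hc₁' (hroots.characteristic_eq hu₁ hu₂))
    (.cexp_of_characteristic_eq hc₁' (hroots.symm.characteristic_eq hu₁ hu₂))

theorem characteristic_eq_implies_eigenvalue_general {u₁ u₂ c₁ c₂ lam0 : ℝ} {lam θ₁ θ₂ : ℂ}
    (hu₁ : u₁ ≠ 0) (hu₂ : u₂ ≠ 0) (hc₁ : c₁ ≠ 0)
    (hroots : CharRoots u₁ u₂ c₁ c₂ lam0 lam θ₁ θ₂)
    (hf : (u₁ : ℂ) / c₁ * (θ₁ * exp θ₁ - θ₂ * exp θ₂)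
      + (lam - lam0 + c₁) / c₁ * (exp θ₁ - exp θ₂) = 0) :
    vlamh θ₁ θ₂ 0 = 0 ∧ vlamc u₁ c₁ lam0 lam θ₁ θ₂ 1 = 0 ∧
      IsHeatExchangeSolution u₁ u₂ c₁ c₂ (lam - lam0)
        (vlamh θ₁ θ₂) (vlamc u₁ c₁ lam0 lam θ₁ θ₂) :=
  ⟨vlamh_zero θ₁ θ₂, (vlamc_one u₁ c₁ lam0 lam θ₁ θ₂).trans hf,
    hroots.isHeatExchangeSolution hu₁ hu₂ hc₁⟩

/-- if `f(λ) = 0` and the explicit function `v_λ` is not identically zero,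
then `v_λ` satisfies the boundary conditions and the eigenvalue equations of
`A_s = A + λ₀ I`; i.e. `λ` is an eigenvalue of `A_s` with eigenfunction `v_λ`. -/
theorem characteristic_eq_implies_eigenvalue
    (u₁ u₂ c₁ c₂ lam0 : ℝ) (hu₁ : 0 < u₁) (hu₂ : 0 < u₂) (hc₁ : 0 < c₁) (hc₂ : 0 < c₂)
    (hlam0 : 0 < lam0)
    (lam θ₁ θ₂ : ℂ) (hroots : CharRoots u₁ u₂ c₁ c₂ lam0 lam θ₁ θ₂)
    (hf : ((u₁ : ℂ) / c₁) * (θ₁ * Complex.exp θ₁ - θ₂ * Complex.exp θ₂)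
      + ((lam - (lam0 : ℂ) + c₁) / c₁) * (Complex.exp θ₁ - Complex.exp θ₂) = 0)
    (hnz : ∃ x ∈ Set.Icc (0:ℝ) 1,
      vlamh θ₁ θ₂ x ≠ 0 ∨ vlamc u₁ c₁ lam0 lam θ₁ θ₂ x ≠ 0) :
    vlamh θ₁ θ₂ 0 = 0 ∧ vlamc u₁ c₁ lam0 lam θ₁ θ₂ 1 = 0 ∧
    ∀ x ∈ Set.Icc (0:ℝ) 1,
      -(u₁ : ℂ) * deriv (vlamh θ₁ θ₂) x
          - (c₁ : ℂ) * (vlamh θ₁ θ₂ x - vlamc u₁ c₁ lam0 lam θ₁ θ₂ x)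
        = (lam - (lam0 : ℂ)) * vlamh θ₁ θ₂ x ∧
      (u₂ : ℂ) * deriv (vlamc u₁ c₁ lam0 lam θ₁ θ₂) x
          + (c₂ : ℂ) * (vlamh θ₁ θ₂ x - vlamc u₁ c₁ lam0 lam θ₁ θ₂ x)
        = (lam - (lam0 : ℂ)) * vlamc u₁ c₁ lam0 lam θ₁ θ₂ x := by
  obtain ⟨h_zero, h_one, sol⟩ :=
    characteristic_eq_implies_eigenvalue_general hu₁.ne' hu₂.ne' hc₁.ne' hroots hf
  exact ⟨h_zero, h_one, fun x _ => ⟨sol.eq_fst x, sol.eq_snd x⟩⟩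
end

section
/- Fix λ₀ > 0 and let λ ∈ ℂ. If a differentiable function v = (v^h, v^c) : [0,1] → ℂ² satisfies v^h(0) = 0, v^c(1) = 0, the eigenvalue equations −u₁ (v^h)' − c₁(v^h − v^c) = (λ − λ₀) v^h and u₂ (v^c)' + c₂(v^h − v^c) = (λ − λ₀) v^c on [0,1], and additionally the observed boundary trace vanishes, v^c(0) = 0, then v is identically zero. (This is the kernel condition Ker(λI − A_s) ∩ Ker(C) = {0} underlying the observability of the projected pair (𝖠, 𝖢), where C v := v^c(0).) -/
open Complex

/-!
An eigenfunction of `A` solves a linear first-order system `v' = M v`: each equation can be divided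
by its nonzero velocity. The inflow condition and the vanishing trace are then a full set of zero
Cauchy data at the left endpoint, so `v` vanishes identically by Grönwall's inequality.
-/

section LinearSystem

variable {𝕜 : Type*} [NontriviallyNormedField 𝕜]

theorem eqOn_zero_of_hasDerivWithinAt_clm_apply {E : Type*} [NormedAddCommGroup E]
    [NormedSpace 𝕜 E] [NormedSpace ℝ E] {A : ℝ → E →L[𝕜] E} {f : ℝ → E} {a b K : ℝ}
    (hA : ∀ t ∈ Set.Ico a b, ‖A t‖ ≤ K) (hf : ContinuousOn f (Set.Icc a b))
    (hf' : ∀ t ∈ Set.Ico a b, HasDerivWithinAt f (A t (f t)) (Set.Ici t) t) (ha : f a = 0) :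
    Set.EqOn f 0 (Set.Icc a b) :=
  eq_zero_of_abs_deriv_le_mul_abs_self_of_eq_zero_right hf hf' ha
    fun t ht => (A t).le_of_opNorm_le (hA t ht) (f t)

/-- The coefficient matrix `M` of the system `v' = M v` equivalent to the eigenvalue equation
`A v = μ v` of the heat-exchanger operator; `v = (v^h, v^c)` is encoded as a pair. If `u₁` or `u₂`
vanishes, division by zero makes the corresponding row `0`. -/
noncomputable def heatExchangerMatrix (u₁ u₂ c₁ c₂ μ : 𝕜) : 𝕜 × 𝕜 →L[𝕜] 𝕜 × 𝕜 :=
  ((-(c₁ + μ) / u₁) • ContinuousLinearMap.fst 𝕜 𝕜 𝕜 +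
      (c₁ / u₁) • ContinuousLinearMap.snd 𝕜 𝕜 𝕜).prod
    ((-c₂ / u₂) • ContinuousLinearMap.fst 𝕜 𝕜 𝕜 +
      ((c₂ + μ) / u₂) • ContinuousLinearMap.snd 𝕜 𝕜 𝕜)

theorem heatExchangerMatrix_apply (u₁ u₂ c₁ c₂ μ h c : 𝕜) :
    heatExchangerMatrix u₁ u₂ c₁ c₂ μ (h, c) =
      (-(c₁ + μ) / u₁ * h + c₁ / u₁ * c, -c₂ / u₂ * h + (c₂ + μ) / u₂ * c) :=
  rfl

theorem eq_heatExchangerMatrix_apply_iff {u₁ u₂ : 𝕜} (hu₁ : u₁ ≠ 0) (hu₂ : u₂ ≠ 0)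
    (c₁ c₂ μ h c h' c' : 𝕜) :
    (h', c') = heatExchangerMatrix u₁ u₂ c₁ c₂ μ (h, c) ↔
      -u₁ * h' - c₁ * (h - c) = μ * h ∧ u₂ * c' + c₂ * (h - c) = μ * c := by
  rw [heatExchangerMatrix_apply, Prod.mk.injEq]
  refine and_congr ?_ ?_ <;> field_simp <;> constructor <;> intro e
  · linear_combination -e
  · linear_combination -e
  · linear_combination e
  · linear_combination e

end LinearSystem

theorem kernel_condition_observability_general {𝕜 : Type*} [RCLike 𝕜] {u₁ u₂ c₁ c₂ μ : 𝕜}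
    (hu₁ : u₁ ≠ 0) (hu₂ : u₂ ≠ 0) {a b : ℝ} {vh vc vh' vc' : ℝ → 𝕜}
    (hdh : ∀ x ∈ Set.Icc a b, HasDerivWithinAt vh (vh' x) (Set.Icc a b) x)
    (hdc : ∀ x ∈ Set.Icc a b, HasDerivWithinAt vc (vc' x) (Set.Icc a b) x)
    (heig : ∀ x ∈ Set.Icc a b,
      -u₁ * vh' x - c₁ * (vh x - vc x) = μ * vh x ∧
      u₂ * vc' x + c₂ * (vh x - vc x) = μ * vc x)
    (hbc : vh a = 0) (htrace : vc a = 0) :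
    ∀ x ∈ Set.Icc a b, vh x = 0 ∧ vc x = 0 := by
  have hderiv : ∀ x ∈ Set.Icc a b, HasDerivWithinAt (fun x => (vh x, vc x))
      (heatExchangerMatrix u₁ u₂ c₁ c₂ μ (vh x, vc x)) (Set.Icc a b) x := fun x hx => by
    rw [← (eq_heatExchangerMatrix_apply_iff hu₁ hu₂ ..).2 (heig x hx)]
    exact (hdh x hx).prodMk (hdc x hx)
  have hzero : Set.EqOn (fun x => (vh x, vc x)) 0 (Set.Icc a b) :=
    eqOn_zero_of_hasDerivWithinAt_clm_apply (fun _ _ => le_rfl)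
      (fun x hx => (hderiv x hx).continuousWithinAt)
      (fun x hx => (hderiv x (Set.Ico_subset_Icc_self hx)).mono_of_mem_nhdsWithin
        (Icc_mem_nhdsGE_of_mem hx))
      (Prod.ext hbc htrace)
  exact fun x hx => Prod.mk.inj (hzero hx)

/-- if `v` is differentiable, satisfies the boundary conditions
`v^h(0) = 0`, `v^c(1) = 0` and the eigenvalue equations of `A_s = A + λ₀ I`, and in
addition the observed boundary trace vanishes (`v^c(0) = 0`), then `v ≡ 0` on `[0,1]`.
This is the kernel condition `Ker(λI − A_s) ∩ Ker(C) = {0}` underlying observability. -/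
theorem kernel_condition_observability
    (u₁ u₂ c₁ c₂ lam0 : ℝ) (hu₁ : 0 < u₁) (hu₂ : 0 < u₂) (hc₁ : 0 < c₁) (hc₂ : 0 < c₂)
    (hlam0 : 0 < lam0) (lam : ℂ)
    (vh vc vh' vc' : ℝ → ℂ)
    (hdh : ∀ x ∈ Set.Icc (0:ℝ) 1, HasDerivAt vh (vh' x) x)
    (hdc : ∀ x ∈ Set.Icc (0:ℝ) 1, HasDerivAt vc (vc' x) x)
    (hbc0 : vh 0 = 0) (hbc1 : vc 1 = 0)
    (heig : ∀ x ∈ Set.Icc (0:ℝ) 1,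
      -(u₁ : ℂ) * vh' x - (c₁ : ℂ) * (vh x - vc x) = (lam - (lam0 : ℂ)) * vh x ∧
      (u₂ : ℂ) * vc' x + (c₂ : ℂ) * (vh x - vc x) = (lam - (lam0 : ℂ)) * vc x)
    (htrace : vc 0 = 0) :
    ∀ x ∈ Set.Icc (0:ℝ) 1, vh x = 0 ∧ vc x = 0 :=
  kernel_condition_observability_general (mod_cast hu₁.ne') (mod_cast hu₂.ne')
    (fun x hx => (hdh x hx).hasDerivWithinAt) (fun x hx => (hdc x hx).hasDerivWithinAt)
    heig hbc0 htrace
end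

section
/- Every eigenvalue of A lies in the closed left half-plane: if λ ∈ ℂ and there exists a nonzero differentiable v = (v^h, v^c) : [0,1] → ℂ² with v^h(0) = 0 and v^c(1) = 0 satisfying −u₁ (v^h)' − c₁(v^h − v^c) = λ v^h and u₂ (v^c)' + c₂(v^h − v^c) = λ v^c on [0,1], then Re(λ) ≤ 0. -/
open Complex

/-!
The energy density `c₂‖h‖² + c₁‖c‖²` is transported with flux `c₂u₁‖h‖² - c₁u₂‖c‖²`. Weighting the
two components crosswise makes the exchange terms combine into the square
`-2c₁c₂‖h - c‖²`, so along an eigenfunction the flux has derivative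
`-2(c₁c₂‖h - c‖² + Re λ · density)`. If `Re λ > 0`, the flux is nonincreasing; the boundary
conditions make it nonpositive at the left end and nonnegative at the right end, so it is constant,
and its derivative, hence the density, vanishes identically.
-/

open Set
open scoped InnerProductSpace

theorem eq_zero_of_hasDerivWithinAt_nonpos_of_le {f f' : ℝ → ℝ} {a b : ℝ} (hab : a < b)
    (hf : ∀ x ∈ Icc a b, HasDerivWithinAt f (f' x) (Icc a b) x)
    (hf' : ∀ x ∈ Ioo a b, f' x ≤ 0) (hle : f a ≤ f b) {x : ℝ} (hx : x ∈ Icc a b) :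
    f' x = 0 := by
  have hanti : AntitoneOn f (Icc a b) :=
    antitoneOn_of_hasDerivWithinAt_nonpos (convex_Icc a b)
      (fun y hy => (hf y hy).continuousWithinAt)
      (fun y hy => (hf y (interior_subset hy)).mono interior_subset)
      (by simpa only [interior_Icc] using hf')
  have hconst : ∀ y ∈ Icc a b, f y = f a := fun y hy =>
    le_antisymm (hanti (left_mem_Icc.2 hab.le) hy hy.1)
      (hle.trans (hanti hy (right_mem_Icc.2 hab.le) hy.2))
  have hzero : HasDerivWithinAt f 0 (Icc a b) x :=
    (hasDerivWithinAt_const x (Icc a b) (f a)).congr hconst (hconst x hx)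
  exact (uniqueDiffOn_Icc hab x hx).eq_deriv _ (hf x hx) hzero

/-- The energy density of a state `(h, c)` of the exchange system. Each component is weighted by the
exchange coefficient of the other one. -/
def energyDensity {V : Type*} [Norm V] (c₁ c₂ : ℝ) (h c : V) : ℝ :=
  c₂ * ‖h‖ ^ 2 + c₁ * ‖c‖ ^ 2

/-- The energy flux of a state `(h, c)`: the two parts of `energyDensity c₁ c₂ h c`, transported to
the right with speed `u₁` and to the left with speed `u₂`. -/
def energyFlux {V : Type*} [Norm V] (u₁ u₂ c₁ c₂ : ℝ) (h c : V) : ℝ :=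
  c₂ * u₁ * ‖h‖ ^ 2 - c₁ * u₂ * ‖c‖ ^ 2

section NormedAddCommGroup

variable {V : Type*} [NormedAddCommGroup V] {u₁ u₂ c₁ c₂ : ℝ}

theorem energyDensity_nonneg (hc₁ : 0 ≤ c₁) (hc₂ : 0 ≤ c₂) (h c : V) :
    0 ≤ energyDensity c₁ c₂ h c := by
  unfold energyDensity
  positivity

theorem energyDensity_pos (hc₁ : 0 < c₁) (hc₂ : 0 < c₂) {h c : V} (hne : h ≠ 0 ∨ c ≠ 0) :
    0 < energyDensity c₁ c₂ h c := by
  unfold energyDensity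
  rcases hne with hh_ne | hc_ne <;> positivity

theorem energyFlux_zero_left_nonpos (hc₁ : 0 ≤ c₁) (hu₂ : 0 ≤ u₂) (c : V) :
    energyFlux u₁ u₂ c₁ c₂ 0 c ≤ 0 := by
  have : 0 ≤ c₁ * u₂ * ‖c‖ ^ 2 := by positivity
  simpa [energyFlux] using this

theorem energyFlux_zero_right_nonneg (hc₂ : 0 ≤ c₂) (hu₁ : 0 ≤ u₁) (h : V) :
    0 ≤ energyFlux u₁ u₂ c₁ c₂ h 0 := by
  have : 0 ≤ c₂ * u₁ * ‖h‖ ^ 2 := by positivity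
  simpa [energyFlux] using this

end NormedAddCommGroup

section InnerProductSpace

variable {𝕜 V : Type*} [RCLike 𝕜] [NormedAddCommGroup V] [InnerProductSpace 𝕜 V]

theorem re_inner_smul_self (z : 𝕜) (v : V) : RCLike.re ⟪v, z • v⟫_𝕜 = RCLike.re z * ‖v‖ ^ 2 := by
  rw [inner_smul_right, inner_self_eq_norm_sq_to_K, ← RCLike.ofReal_pow, RCLike.re_mul_ofReal]

variable [NormedSpace ℝ V]

theorem hasDerivWithinAt_norm_sq {v : ℝ → V} {v' : V} {s : Set ℝ} {x : ℝ}
    (hv : HasDerivWithinAt v v' s x) :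
    HasDerivWithinAt (fun y => ‖v y‖ ^ 2) (2 * RCLike.re ⟪v x, v'⟫_𝕜) s x := by
  have hre := (RCLike.reCLM (K := 𝕜)).hasFDerivAt.comp_hasDerivWithinAt x (hv.inner 𝕜 hv)
  simpa [Function.comp_def, inner_re_symm v' (v x), inner_self_eq_norm_sq, two_mul] using hre

theorem hasDerivWithinAt_energyFlux {u₁ u₂ c₁ c₂ : ℝ} {h c : ℝ → V} {h' c' p q : V} {s : Set ℝ}
    {x : ℝ} (hh : HasDerivWithinAt h h' s x) (hc : HasDerivWithinAt c c' s x)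
    (hp : -u₁ • h' - c₁ • (h x - c x) = p) (hq : u₂ • c' + c₂ • (h x - c x) = q) :
    HasDerivWithinAt (fun y => energyFlux u₁ u₂ c₁ c₂ (h y) (c y))
      (-2 * (c₁ * c₂ * ‖h x - c x‖ ^ 2
        + (c₂ * RCLike.re ⟪h x, p⟫_𝕜 + c₁ * RCLike.re ⟪c x, q⟫_𝕜))) s x := by
  have hhp : -u₁ * RCLike.re ⟪h x, h'⟫_𝕜 - c₁ * (‖h x‖ ^ 2 - RCLike.re ⟪h x, c x⟫_𝕜)
      = RCLike.re ⟪h x, p⟫_𝕜 := by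
    simp only [← hp, inner_sub_right, inner_smul_right_eq_smul, map_sub, RCLike.smul_re,
      inner_self_eq_norm_sq]
  have hcq : u₂ * RCLike.re ⟪c x, c'⟫_𝕜 + c₂ * (RCLike.re ⟪h x, c x⟫_𝕜 - ‖c x‖ ^ 2)
      = RCLike.re ⟪c x, q⟫_𝕜 := by
    simp only [← hq, inner_add_right, inner_sub_right, inner_smul_right_eq_smul, map_add, map_sub,
      RCLike.smul_re, inner_self_eq_norm_sq, inner_re_symm (c x) (h x)]
  refine (((hasDerivWithinAt_norm_sq (𝕜 := 𝕜) hh).const_mul (c₂ * u₁)).sub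
    ((hasDerivWithinAt_norm_sq (𝕜 := 𝕜) hc).const_mul (c₁ * u₂))).congr_deriv ?_
  rw [norm_sub_sq (𝕜 := 𝕜)]
  linear_combination (-2 * c₂) * hhp - 2 * c₁ * hcq

theorem hasDerivWithinAt_energyFlux_of_eigen {u₁ u₂ c₁ c₂ : ℝ} {lam : 𝕜} {h c : ℝ → V} {h' c' : V}
    {s : Set ℝ} {x : ℝ} (hh : HasDerivWithinAt h h' s x) (hc : HasDerivWithinAt c c' s x)
    (heigh : -u₁ • h' - c₁ • (h x - c x) = lam • h x)
    (heigc : u₂ • c' + c₂ • (h x - c x) = lam • c x) :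
    HasDerivWithinAt (fun y => energyFlux u₁ u₂ c₁ c₂ (h y) (c y))
      (-2 * (c₁ * c₂ * ‖h x - c x‖ ^ 2 + RCLike.re lam * energyDensity c₁ c₂ (h x) (c x))) s x := by
  refine (hasDerivWithinAt_energyFlux (𝕜 := 𝕜) hh hc heigh heigc).congr_deriv ?_
  rw [re_inner_smul_self, re_inner_smul_self, energyDensity]
  ring

theorem eigenvalues_in_left_half_plane_general {u₁ u₂ c₁ c₂ : ℝ} (hu₁ : 0 ≤ u₁) (hu₂ : 0 ≤ u₂)
    (hc₁ : 0 < c₁) (hc₂ : 0 < c₂) {lam : 𝕜} {a b : ℝ} (hab : a < b) {vh vc vh' vc' : ℝ → V}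
    (hdh : ∀ x ∈ Icc a b, HasDerivWithinAt vh (vh' x) (Icc a b) x)
    (hdc : ∀ x ∈ Icc a b, HasDerivWithinAt vc (vc' x) (Icc a b) x)
    (hvh : vh a = 0) (hvc : vc b = 0)
    (heig : ∀ x ∈ Icc a b,
      -u₁ • vh' x - c₁ • (vh x - vc x) = lam • vh x ∧
      u₂ • vc' x + c₂ • (vh x - vc x) = lam • vc x)
    (hnz : ∃ x ∈ Icc a b, vh x ≠ 0 ∨ vc x ≠ 0) :
    RCLike.re lam ≤ 0 := by
  by_contra! hlam
  let flux (x : ℝ) : ℝ := energyFlux u₁ u₂ c₁ c₂ (vh x) (vc x)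
  let density (x : ℝ) : ℝ := energyDensity c₁ c₂ (vh x) (vc x)
  let flux' (x : ℝ) : ℝ := -2 * (c₁ * c₂ * ‖vh x - vc x‖ ^ 2 + RCLike.re lam * density x)
  have hflux : ∀ x ∈ Icc a b, HasDerivWithinAt flux (flux' x) (Icc a b) x := fun x hx =>
    hasDerivWithinAt_energyFlux_of_eigen (hdh x hx) (hdc x hx) (heig x hx).1 (heig x hx).2
  have hflux_le (x : ℝ) : flux' x ≤ -2 * (RCLike.re lam * density x) := by
    have : 0 ≤ c₁ * c₂ * ‖vh x - vc x‖ ^ 2 := by positivity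
    linarith
  have hflux_nonpos (x : ℝ) : flux' x ≤ 0 := by
    linarith [hflux_le x, mul_nonneg hlam.le (energyDensity_nonneg hc₁.le hc₂.le (vh x) (vc x))]
  have hflux_ends : flux a ≤ flux b := by
    simp only [flux, hvh, hvc]
    exact (energyFlux_zero_left_nonpos hc₁.le hu₂ _).trans
      (energyFlux_zero_right_nonneg hc₂.le hu₁ _)
  obtain ⟨x, hx, hne⟩ := hnz
  have hflux_zero : flux' x = 0 :=
    eq_zero_of_hasDerivWithinAt_nonpos_of_le hab hflux (fun y _ => hflux_nonpos y) hflux_ends hx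
  linarith [hflux_le x, mul_pos hlam (energyDensity_pos hc₁ hc₂ hne)]

end InnerProductSpace

/-- every eigenvalue of `A` lies in the closed left half-plane: if a
nonzero differentiable `v = (v^h, v^c)` satisfies `v^h(0) = 0`, `v^c(1) = 0` and
`−u₁ (v^h)' − c₁(v^h − v^c) = λ v^h`, `u₂ (v^c)' + c₂(v^h − v^c) = λ v^c` on `[0,1]`,
then `Re(λ) ≤ 0`. -/
theorem eigenvalues_in_left_half_plane
    (u₁ u₂ c₁ c₂ : ℝ) (hu₁ : 0 < u₁) (hu₂ : 0 < u₂) (hc₁ : 0 < c₁) (hc₂ : 0 < c₂)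
    (lam : ℂ)
    (vh vc vh' vc' : ℝ → ℂ)
    (hdh : ∀ x ∈ Set.Icc (0:ℝ) 1, HasDerivAt vh (vh' x) x)
    (hdc : ∀ x ∈ Set.Icc (0:ℝ) 1, HasDerivAt vc (vc' x) x)
    (hbc0 : vh 0 = 0) (hbc1 : vc 1 = 0)
    (heig : ∀ x ∈ Set.Icc (0:ℝ) 1,
      -(u₁ : ℂ) * vh' x - (c₁ : ℂ) * (vh x - vc x) = lam * vh x ∧
      (u₂ : ℂ) * vc' x + (c₂ : ℂ) * (vh x - vc x) = lam * vc x)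
    (hnz : ∃ x ∈ Set.Icc (0:ℝ) 1, vh x ≠ 0 ∨ vc x ≠ 0) :
    lam.re ≤ 0 := by
  exact eigenvalues_in_left_half_plane_general (lam := lam) hu₁.le hu₂.le hc₁ hc₂ one_pos
    (fun x hx => (hdh x hx).hasDerivWithinAt) (fun x hx => (hdc x hx).hasDerivWithinAt)
    hbc0 hbc1 (by simpa [real_smul] using heig) hnz
end
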